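/- Assume the Generalized Riemann Hypothesis for all Dirichlet L-functions. Let e ∈ ℕ with e ≥ 3, and let π_e(x) = #{p ≤ x : p prime and gcd(p−1, e) = 1}. Then there exists a constant C > 0 (depending only on e) such that for all x ≥ 2, |π_e(x) − (φ₁(e)/φ(e))·li(x)| ≤ C·√x·ln x, where φ₁(e)/φ(e) = ∏_{l prime, l ∣ e} (1 − 1/(l−1)). -/

import Mathlib

open MeasureTheory Set

/-- integral logarithm `li x = ∫₀^x dt / ln t` as a Cauchy principal value at `t = 1` -/
noncomputable def li (x : ℝ) : ℝ :=
  Filter.limUnder (nhdsWithin (0:ℝ) (Set.Ioi 0)) fun ε =>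
    (∫ t in Set.Ioo (0:ℝ) (1 - ε), 1 / Real.log t) + ∫ t in Set.Ioo (1 + ε) x, 1 / Real.log t

/-- The Generalized Riemann Hypothesis for all Dirichlet L-functions: every zero of `L(s, χ)`
with real part strictly between 0 and 1 has real part 1/2. -/
def GeneralizedRiemannHypothesis : Prop :=
  ∀ (N : ℕ) [NeZero N] (χ : DirichletCharacter ℂ N) (s : ℂ),
    DirichletCharacter.LFunction χ s = 0 → 0 < s.re → s.re < 1 → s.re = 1 / 2

/-- Number of primes `p ≤ x` with `gcd(p - 1, e) = 1`. -/
noncomputable def primePiCoprime (e : ℕ) (x : ℝ) : ℕ :=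
  Nat.card {p : ℕ // p.Prime ∧ (p : ℝ) ≤ x ∧ Nat.gcd (p - 1) e = 1}

section localfact
open Complex Metric

lemma gh_div_zero {g : ℂ → ℂ} (hg : Differentiable ℂ g) {ρ : ℂ} (h : g ρ = 0) :
    ∃ k : ℂ → ℂ, Differentiable ℂ k ∧ ∀ s, g s = (s - ρ) * k s := by
  refine ⟨dslope g ρ, ?_, fun s => ?_⟩
  · rw [← differentiableOn_univ, Complex.differentiableOn_dslope Filter.univ_mem]
    exact hg.differentiableOn
  · have := sub_smul_dslope g ρ s
    rw [h, sub_zero, smul_eq_mul] at this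
    exact this.symm

/-- the entire function with Blaschke modulus -/
noncomputable def ghH (R' : ℝ) {n : ℕ} (Z : Fin n → ℂ) (g : ℂ → ℂ) (s : ℂ) : ℂ :=
  g s * ∏ i, (((R' : ℂ) ^ 2 - (starRingEnd ℂ) (Z i) * s) / R')

lemma ghH_diff {R' : ℝ} {n : ℕ} {Z : Fin n → ℂ} {g : ℂ → ℂ} (hg : Differentiable ℂ g) :
    Differentiable ℂ (ghH R' Z g) := by
  unfold ghH
  fun_prop

lemma gh_norm_circle {R' : ℝ} (hR' : 0 < R') {s ρ : ℂ} (hs : ‖s‖ = R') :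
    ‖((R' : ℂ) ^ 2 - (starRingEnd ℂ) ρ * s) / R'‖ = ‖s - ρ‖ := by
  have h1 : (R' : ℂ) ^ 2 = s * (starRingEnd ℂ) s := by
    rw [Complex.mul_conj, Complex.normSq_eq_norm_sq, hs]; push_cast; rfl
  have h2 : (R' : ℂ) ^ 2 - (starRingEnd ℂ) ρ * s = s * (starRingEnd ℂ) (s - ρ) := by
    rw [h1, map_sub]; ring
  rw [h2, norm_div, norm_mul, Complex.norm_conj, hs, Complex.norm_real, Real.norm_eq_abs,
    abs_of_pos hR']
  field_simp

lemma ghH_bound {R' M : ℝ} (hR' : 0 < R') {n : ℕ} {Z : Fin n → ℂ} {f g : ℂ → ℂ}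
    (hg : Differentiable ℂ g) (hfg : ∀ s, f s = (∏ i, (s - Z i)) * g s)
    (hM : ∀ s, ‖s‖ ≤ R' → ‖f s‖ ≤ M) {s : ℂ} (hs : ‖s‖ ≤ R') : ‖ghH R' Z g s‖ ≤ M := by
  refine Complex.norm_le_of_forall_mem_frontier_norm_le (U := ball 0 R') isBounded_ball
    (ghH_diff hg).diffContOnCl ?_ ?_
  · intro z hz
    rw [frontier_ball _ hR'.ne'] at hz
    have hz' : ‖z‖ = R' := by simpa using hz
    refine le_trans (le_of_eq ?_) (hM z hz'.le)
    rw [hfg, ghH, norm_mul, norm_mul, norm_prod, norm_prod, mul_comm]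
    congr 1
    exact Finset.prod_congr rfl fun i _ => gh_norm_circle hR' hz'
  · rw [closure_ball _ hR'.ne']; simpa using hs

lemma ghH_zero {R' : ℝ} (hR' : 0 < R') {n : ℕ} {Z : Fin n → ℂ} {g : ℂ → ℂ} :
    ‖ghH R' Z g 0‖ = ‖g 0‖ * R' ^ n := by
  simp only [ghH, norm_mul, mul_zero, sub_zero, Finset.prod_const, Finset.card_univ,
    Fintype.card_fin, norm_pow]
  congr 2
  rw [norm_div, norm_pow, Complex.norm_real, Real.norm_eq_abs, abs_of_pos hR']
  field_simp

lemma gh_f_zero {R : ℝ} {n : ℕ} {Z : Fin n → ℂ} {f g : ℂ → ℂ}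
    (hfg : ∀ s, f s = (∏ i, (s - Z i)) * g s) (hZ : ∀ i, ‖Z i‖ ≤ R) :
    ‖f 0‖ ≤ R ^ n * ‖g 0‖ := by
  rw [hfg, norm_mul, norm_prod]
  gcongr
  calc ∏ i, ‖0 - Z i‖ ≤ ∏ i : Fin n, R := Finset.prod_le_prod (fun _ _ => norm_nonneg _)
        (fun i _ => by simpa using hZ i)
    _ = R ^ n := by simp

lemma gh_count {R R' M : ℝ} (hR : 0 < R) (hRR : R < R') {n : ℕ} {Z : Fin n → ℂ} {f g : ℂ → ℂ}
    (hf0 : f 0 ≠ 0)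
    (hg : Differentiable ℂ g) (hfg : ∀ s, f s = (∏ i, (s - Z i)) * g s)
    (hM : ∀ s, ‖s‖ ≤ R' → ‖f s‖ ≤ M) (hZ : ∀ i, ‖Z i‖ ≤ R) :
    (n : ℝ) * Real.log (R' / R) ≤ Real.log (M / ‖f 0‖) := by
  have hR' := hR.trans hRR
  have h1 := ghH_bound hR' hg hfg hM (s := 0) (by simpa using hR'.le)
  rw [ghH_zero hR'] at h1
  have h2 := gh_f_zero hfg hZ
  have hf0' : 0 < ‖f 0‖ := norm_pos_iff.mpr hf0
  rw [← Real.log_pow]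
  apply Real.log_le_log (by positivity)
  rw [le_div_iff₀ hf0', div_pow]
  calc R' ^ n / R ^ n * ‖f 0‖ ≤ R' ^ n / R ^ n * (R ^ n * ‖g 0‖) := by gcongr
    _ = ‖g 0‖ * R' ^ n := by field_simp
    _ ≤ M := h1

lemma gh_exists_fact {R R' M : ℝ} (hR : 0 < R) (hRR : R < R') {f : ℂ → ℂ} (hf : Differentiable ℂ f)
    (hf0 : f 0 ≠ 0) (hM : ∀ s, ‖s‖ ≤ R' → ‖f s‖ ≤ M) :
    ∃ (n : ℕ) (Z : Fin n → ℂ) (g : ℂ → ℂ), Differentiable ℂ g ∧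
      (∀ s, f s = (∏ i, (s - Z i)) * g s) ∧ (∀ i, ‖Z i‖ ≤ R) ∧ ∀ s, ‖s‖ ≤ R → g s ≠ 0 := by
  by_contra! hcon
  have hlog : 0 < Real.log (R' / R) := Real.log_pos (by rw [lt_div_iff₀ hR]; linarith)
  have key : ∀ n : ℕ, ∃ (Z : Fin n → ℂ) (g : ℂ → ℂ), Differentiable ℂ g ∧
      (∀ s, f s = (∏ i, (s - Z i)) * g s) ∧ (∀ i, ‖Z i‖ ≤ R) := by
    intro n
    induction n with
    | zero => exact ⟨Fin.elim0, f, hf, by simp, fun i => i.elim0⟩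
    | succ n ih =>
      obtain ⟨Z, g, hg, hfg, hZ⟩ := ih
      obtain ⟨ρ, hρ, hz⟩ := hcon n Z g hg hfg hZ
      obtain ⟨k, hk, hgk⟩ := gh_div_zero hg hz
      refine ⟨Fin.cons ρ Z, k, hk, fun s => ?_, fun i => ?_⟩
      · rw [hfg, hgk, Fin.prod_univ_succ]; simp; ring
      · refine Fin.cases ?_ (fun j => ?_) i
        · simpa using hρ
        · simpa using hZ j
  obtain ⟨n, hn⟩ := exists_nat_gt (Real.log (M / ‖f 0‖) / Real.log (R' / R))
  obtain ⟨Z, g, hg, hfg, hZ⟩ := key n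
  have := gh_count hR hRR hf0 hg hfg hM hZ
  rw [div_lt_iff₀ hlog] at hn
  linarith

/-- Borel–Carathéodory for the logarithmic derivative -/
lemma gh_logDeriv_bound {r r1 R ℓ : ℝ} (hr : r < r1) (hr0 : 0 < r) (hrR : r1 < R) {h : ℂ → ℂ}
    (hh : Differentiable ℂ h) (hnz : ∀ s, ‖s‖ < R → h s ≠ 0) (hℓ : 0 < ℓ)
    (hb : ∀ s, ‖s‖ < R → ‖h s‖ ≤ ‖h 0‖ * Real.exp ℓ) {s : ℂ} (hs : ‖s‖ ≤ r) :
    ‖logDeriv h s‖ ≤ 2 * ℓ * R / (R - r1) / (r1 - r) := by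
  have hR0 : 0 < R := by linarith
  have hd : DifferentiableOn ℂ (logDeriv h) (ball 0 R) := by
    intro z hz
    have hz' : ‖z‖ < R := by simpa using hz
    exact (((hh.contDiff (n := 2)).differentiable_deriv_two z).div (hh z) (hnz z hz')).differentiableWithinAt
  obtain ⟨φ, hφ⟩ := hd.isExactOn_ball
  wlog h0 : φ 0 = 0 generalizing φ
  · refine this (fun z => φ z - φ 0) (fun z hz => ?_) (by simp)
    exact (hφ z hz).sub_const _
  have hconst : ∀ z ∈ ball (0:ℂ) R, h z * exp (-φ z) = h 0 := by
    intro z hz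
    have hder : ∀ w ∈ ball (0:ℂ) R, HasDerivAt (fun z => h z * exp (-φ z)) 0 w := by
      intro w hw
      have hw' : ‖w‖ < R := by simpa using hw
      have := (hh w).hasDerivAt.mul ((hφ w hw).neg.cexp)
      refine HasDerivAt.congr_deriv (f := fun z => h z * exp (-φ z)) this ?_
      rw [logDeriv_apply]
      have := hnz w hw'
      simp only [Pi.neg_apply]
      field_simp
      ring
    have := (convex_ball (0:ℂ) R).is_const_of_fderivWithin_eq_zero (𝕜 := ℂ)
      (f := fun z => h z * exp (-φ z))
      (fun w hw => (hder w hw).differentiableAt.differentiableWithinAt)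
      (fun w hw => by
        rw [fderivWithin_of_isOpen isOpen_ball hw]
        ext; simp [(hder w hw).deriv]) hz (mem_ball_self hR0)
    simpa [h0] using this
  have h0ne : 0 < ‖h 0‖ := norm_pos_iff.mpr (hnz 0 (by simpa using hR0))
  have hre : MapsTo φ (ball 0 R) {z | z.re ≤ ℓ} := by
    intro z hz
    have hz' : ‖z‖ < R := by simpa using hz
    have h1 : h z = h 0 * exp (φ z) := by
      rw [← hconst z hz, mul_assoc, ← Complex.exp_add]; simp
    have h2 := hb z hz'
    rw [h1, norm_mul, Complex.norm_exp] at h2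
    have := le_of_mul_le_mul_left h2 h0ne
    exact Real.exp_le_exp.mp this
  have hφd : DifferentiableOn ℂ φ (ball 0 R) := fun w hw => (hφ w hw).differentiableAt.differentiableWithinAt
  have hsR : s ∈ ball (0:ℂ) R := by simp; linarith
  rw [← (hφ s hsR).deriv]
  refine Complex.norm_deriv_le_of_forall_mem_sphere_norm_le (by linarith) ?_ ?_
  · apply DifferentiableOn.diffContOnCl
    refine hφd.mono ?_
    refine closure_ball_subset_closedBall.trans ?_
    intro z hz
    simp only [mem_closedBall, dist_eq_norm, mem_ball, sub_zero] at hz ⊢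
    calc ‖z‖ = ‖(z - s) + s‖ := by ring_nf
      _ ≤ ‖z - s‖ + ‖s‖ := norm_add_le _ _
      _ < R := by linarith
  · intro z hz
    have hz1 : ‖z‖ ≤ r1 := by
      simp only [mem_sphere, dist_eq_norm] at hz
      calc ‖z‖ = ‖(z - s) + s‖ := by ring_nf
        _ ≤ ‖z - s‖ + ‖s‖ := norm_add_le _ _
        _ ≤ r1 := by linarith
    have := Complex.borelCaratheodory_zero hℓ hφd hre hR0 (z := z) (by simp; linarith) h0
    refine this.trans ?_
    have : 0 < R - r1 := by linarith
    have : R - r1 ≤ R - ‖z‖ := by linarith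
    have : ‖z‖ ≤ R := by linarith
    gcongr

end localfact

section localfact2
open Complex Metric

lemma gh_local {r r1 R R' ℓ M : ℝ} (hr0 : 0 < r) (hr : r < r1) (hrR : r1 < R) (hRR : R < R')
    {f : ℂ → ℂ} (hf : Differentiable ℂ f)
    (hf0 : f 0 ≠ 0) (hM : ∀ s, ‖s‖ ≤ R' → ‖f s‖ ≤ M) (hℓ : 0 < ℓ) (hMℓ : M ≤ ‖f 0‖ * Real.exp ℓ) :
    ∃ (n : ℕ) (Z : Fin n → ℂ), (n : ℝ) * Real.log (R' / R) ≤ ℓ ∧ (∀ i, ‖Z i‖ ≤ R ∧ f (Z i) = 0) ∧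
      ∀ s, ‖s‖ ≤ r → f s ≠ 0 → ‖logDeriv f s - ∑ i, 1 / (s - Z i)‖ ≤
        2 * ℓ * R / (R - r1) / (r1 - r) + n * (R / (R' ^ 2 - R ^ 2)) := by
  have hR : 0 < R := by linarith
  have hR' : 0 < R' := by linarith
  have hf0' : 0 < ‖f 0‖ := norm_pos_iff.mpr hf0
  have hM0 : 0 < M := hf0'.trans_le (hM 0 (by simpa using hR'.le))
  obtain ⟨n, Z, g, hg, hfg, hZ, hgnz⟩ := gh_exists_fact hR hRR hf hf0 hM
  refine ⟨n, Z, ?_, fun i => ⟨hZ i, ?_⟩, ?_⟩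
  · refine (gh_count hR hRR hf0 hg hfg hM hZ).trans ?_
    rw [Real.log_le_iff_le_exp (by positivity), div_le_iff₀ hf0']
    linarith
  · rw [hfg, Finset.prod_eq_zero (Finset.mem_univ i) (by simp), zero_mul]
  intro s hs hfs
  have hfac : ∀ i, ∀ s : ℂ, ‖s‖ ≤ R → R' ^ 2 - R ^ 2 ≤ ‖((R' : ℂ) ^ 2 - (starRingEnd ℂ) (Z i) * s)‖ := by
    intro i s hs
    have h1 := norm_sub_norm_le ((R' : ℂ) ^ 2) ((starRingEnd ℂ) (Z i) * s)
    rw [norm_mul, Complex.norm_conj, norm_pow, Complex.norm_real, Real.norm_eq_abs, sq_abs] at h1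
    have : ‖Z i‖ * ‖s‖ ≤ R * R := mul_le_mul (hZ i) hs (norm_nonneg _) hR.le
    nlinarith
  have hRR2 : 0 < R' ^ 2 - R ^ 2 := by nlinarith
  have hfacne : ∀ i, ∀ s : ℂ, ‖s‖ ≤ R → ((R' : ℂ) ^ 2 - (starRingEnd ℂ) (Z i) * s) ≠ 0 := by
    intro i s hs h0
    have := hfac i s hs
    rw [h0, norm_zero] at this
    linarith
  have hR'c : (R' : ℂ) ≠ 0 := by exact_mod_cast hR'.ne'
  have hsR : ‖s‖ ≤ R := by linarith
  have hgs := hgnz s hsR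
  -- bound for logDeriv of ghH
  have hH := gh_logDeriv_bound (h := ghH R' Z g) hr hr0 hrR (ghH_diff hg) (fun s hs => by
      unfold ghH
      refine mul_ne_zero (hgnz s hs.le) ?_
      exact Finset.prod_ne_zero_iff.mpr fun i _ => div_ne_zero (hfacne i s hs.le) hR'c) hℓ
      (fun s hs => by
        refine (ghH_bound hR' hg hfg hM (by linarith)).trans (hMℓ.trans ?_)
        gcongr
        rw [ghH_zero hR']
        refine (gh_f_zero hfg hZ).trans ?_
        rw [mul_comm]
        gcongr) hs
  have hL1 : logDeriv (ghH R' Z g) s = logDeriv g s +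
      ∑ i, (-(starRingEnd ℂ) (Z i)) / ((R' : ℂ) ^ 2 - (starRingEnd ℂ) (Z i) * s) := by
    unfold ghH
    rw [logDeriv_mul s hgs (Finset.prod_ne_zero_iff.mpr fun i _ => div_ne_zero (hfacne i s hsR) hR'c)
      (hg s) (by fun_prop), logDeriv_prod
      (f := fun i s => ((R' : ℂ) ^ 2 - (starRingEnd ℂ) (Z i) * s) / R')
      (fun i _ => div_ne_zero (hfacne i s hsR) hR'c) (fun i _ => by fun_prop)]
    congr 1
    refine Finset.sum_congr rfl fun i _ => ?_
    rw [logDeriv_apply]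
    have : HasDerivAt (fun s : ℂ => ((R' : ℂ) ^ 2 - (starRingEnd ℂ) (Z i) * s) / R')
        (-((starRingEnd ℂ) (Z i)) / R') s := by
      have := (((hasDerivAt_id s).const_mul ((starRingEnd ℂ) (Z i))).const_sub ((R' : ℂ) ^ 2)).div_const (R' : ℂ)
      simpa using this
    rw [this.deriv]
    field_simp
  have hprodne : ∀ i, s - Z i ≠ 0 := by
    intro i h0
    apply hfs
    rw [hfg, Finset.prod_eq_zero (Finset.mem_univ i) h0, zero_mul]
  have hL2 : logDeriv f s = (∑ i, 1 / (s - Z i)) + logDeriv g s := by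
    have : f = fun s => (∏ i, (s - Z i)) * g s := funext hfg
    rw [this, logDeriv_mul s (Finset.prod_ne_zero_iff.mpr fun i _ => hprodne i) hgs (by fun_prop) (hg s),
      logDeriv_prod (f := fun i s => s - Z i) (fun i _ => hprodne i) (fun i _ => by fun_prop)]
    congr 1
    refine Finset.sum_congr rfl fun i _ => ?_
    rw [logDeriv_apply]
    have : HasDerivAt (fun s : ℂ => s - Z i) 1 s := (hasDerivAt_id s).sub_const _
    rw [this.deriv]
  have hsum : ‖∑ i, (-(starRingEnd ℂ) (Z i)) / ((R' : ℂ) ^ 2 - (starRingEnd ℂ) (Z i) * s)‖ ≤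
      n * (R / (R' ^ 2 - R ^ 2)) := by
    refine (norm_sum_le _ _).trans ?_
    calc _ ≤ ∑ i : Fin n, R / (R' ^ 2 - R ^ 2) := by
          refine Finset.sum_le_sum fun i _ => ?_
          rw [norm_div, norm_neg, Complex.norm_conj]
          exact div_le_div₀ hR.le (hZ i) hRR2 (hfac i s hsR)
      _ = _ := by simp
  have : logDeriv f s - ∑ i, 1 / (s - Z i) = logDeriv (ghH R' Z g) s -
    ∑ i, (-(starRingEnd ℂ) (Z i)) / ((R' : ℂ) ^ 2 - (starRingEnd ℂ) (Z i) * s) := by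
    rw [hL1, hL2]; ring
  rw [this]
  exact (norm_sub_le _ _).trans (add_le_add hH hsum)

/-- The analytic input on an `L`-function (with its pole removed). -/
structure GHGood (f : ℂ → ℂ) (A : ℝ) : Prop where
  one_le : 1 ≤ A
  diff : Differentiable ℂ f
  growth : ∀ s : ℂ, 1 / 10 ≤ s.re → s.re ≤ 4 → ‖f s‖ ≤ A * (1 + |s.im|) ^ 2
  lower : ∀ t : ℝ, 1 / A ≤ ‖f (2 + t * I)‖
  nz : ∀ s : ℂ, 1 / 2 < s.re → f s ≠ 0

lemma gh_log_pos (T : ℝ) : Real.log 2 ≤ Real.log (|T| + 2) :=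
  Real.log_le_log (by norm_num) (by linarith [abs_nonneg T])

lemma gh_log_three (T : ℝ) : Real.log (|T| + 3) ≤ 2 * Real.log (|T| + 2) := by
  have h := abs_nonneg T
  rw [show (2:ℝ) * Real.log (|T| + 2) = Real.log ((|T| + 2) ^ 2) by rw [Real.log_pow]; norm_num]
  exact Real.log_le_log (by linarith) (by nlinarith)

lemma GHGood.local {f : ℂ → ℂ} {A : ℝ} (hG : GHGood f A) :
    ∃ C : ℝ, 0 < C ∧ ∀ T : ℝ, ∃ (n : ℕ) (Z : Fin n → ℂ), (n : ℝ) ≤ C * Real.log (|T| + 2) ∧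
      (∀ i, (Z i).re ≤ 1 / 2) ∧ ∀ s : ℂ, ‖s - (2 + T * I)‖ ≤ 1.81 → 1 / 2 < s.re →
        ‖logDeriv f s - ∑ i, 1 / (s - Z i)‖ ≤ C * Real.log (|T| + 2) := by
  have hA := hG.one_le
  have hlA : 0 ≤ Real.log A := Real.log_nonneg hA
  have hl2 : 0 < Real.log 2 := Real.log_pos (by norm_num)
  set K := 2 * Real.log A / Real.log 2 + 4 with hK
  have hK0 : 0 < K := by positivity
  have hlR : 0 < Real.log ((1.9 : ℝ) / 1.85) := Real.log_pos (by norm_num)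
  set D := K / Real.log ((1.9 : ℝ) / 1.85) with hD
  have hD0 : 0 < D := by positivity
  refine ⟨D + (2 * K * 1.85 / (1.85 - 1.82) / (1.82 - 1.81) + D * (1.85 / (1.9 ^ 2 - 1.85 ^ 2))),
    by norm_num; positivity, ?_⟩
  intro T
  have hT := abs_nonneg T
  have hlT := gh_log_pos T
  have hlT0 : 0 < Real.log (|T| + 2) := hl2.trans_le hlT
  set F : ℂ → ℂ := fun z => f (z + (2 + T * I)) with hF
  have hFd : Differentiable ℂ F := hG.diff.comp (by fun_prop)
  have hF0 : 1 / A ≤ ‖F 0‖ := by simpa [hF] using hG.lower T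
  have hF0' : F 0 ≠ 0 := by
    rw [← norm_pos_iff]; exact lt_of_lt_of_le (by positivity) hF0
  set ℓ := K * Real.log (|T| + 2) with hℓ
  have hℓ0 : 0 < ℓ := by positivity
  have hM : ∀ s : ℂ, ‖s‖ ≤ 1.9 → ‖F s‖ ≤ A * (|T| + 3) ^ 2 := by
    intro s hs
    have h1 := (abs_re_le_norm s).trans hs
    have h2 := (abs_im_le_norm s).trans hs
    rw [abs_le] at h1
    refine (hG.growth _ (by simp; linarith) (by simp; linarith)).trans ?_
    have : |(s + (2 + T * I)).im| ≤ |T| + 1.9 := by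
      simp only [add_im, mul_im, I_re, I_im, ofReal_re, ofReal_im, im_ofNat]
      norm_num at h2 ⊢
      linarith [abs_add_le s.im T]
    exact mul_le_mul_of_nonneg_left (pow_le_pow_left₀ (by positivity) (by linarith) 2) (by linarith)
  have hMℓ : A * (|T| + 3) ^ 2 ≤ ‖F 0‖ * Real.exp ℓ := by
    have h1 : A ^ 2 * (|T| + 3) ^ 2 ≤ Real.exp ℓ := by
      rw [← Real.log_le_iff_le_exp (by positivity), Real.log_mul (by positivity) (by positivity),
        Real.log_pow, Real.log_pow, hℓ, hK]
      have := gh_log_three T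
      have h3 : 2 * Real.log A ≤ 2 * Real.log A / Real.log 2 * Real.log (|T| + 2) := by
        rw [div_mul_eq_mul_div, le_div_iff₀ hl2]
        gcongr
      push_cast
      nlinarith
    calc A * (|T| + 3) ^ 2 = 1 / A * (A ^ 2 * (|T| + 3) ^ 2) := by field_simp
      _ ≤ ‖F 0‖ * Real.exp ℓ := by gcongr
  obtain ⟨n, Z, hn, hZ, hb⟩ := gh_local (r := 1.81) (r1 := 1.82) (R := 1.85) (R' := 1.9)
    (by norm_num) (by norm_num) (by norm_num) (by norm_num) hFd hF0' hM hℓ0 hMℓ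
  have hn' : (n : ℝ) ≤ D * Real.log (|T| + 2) := by
    rw [hD, div_mul_eq_mul_div, le_div_iff₀ hlR]; exact hn
  refine ⟨n, fun i => Z i + (2 + T * I), ?_, ?_, ?_⟩
  · refine hn'.trans ?_
    gcongr
    have : 0 ≤ 2 * K * 1.85 / (1.85 - 1.82) / (1.82 - 1.81) + D * (1.85 / (1.9 ^ 2 - 1.85 ^ 2)) := by
      norm_num; positivity
    linarith
  · intro i
    by_contra! h
    exact hG.nz _ h (hZ i).2
  · intro s hs hre
    have hs' := hb (s - (2 + T * I)) hs (by simpa [hF] using hG.nz s hre)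
    have e1 : logDeriv F (s - (2 + T * I)) = logDeriv f s := by
      simp only [logDeriv_apply, hF]
      rw [deriv_comp_add_const]
      simp
    rw [e1] at hs'
    have e2 : ∀ i, s - (Z i + (2 + T * I)) = s - (2 + T * I) - Z i := fun i => by ring
    simp only [e2]
    refine hs'.trans ?_
    calc _ ≤ 2 * ℓ * 1.85 / (1.85 - 1.82) / (1.82 - 1.81) +
            (D * Real.log (|T| + 2)) * (1.85 / (1.9 ^ 2 - 1.85 ^ 2)) := by
          gcongr
      _ = (2 * K * 1.85 / (1.85 - 1.82) / (1.82 - 1.81) + D * (1.85 / (1.9 ^ 2 - 1.85 ^ 2)))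
            * Real.log (|T| + 2) := by rw [hℓ]; ring
      _ ≤ _ := mul_le_mul_of_nonneg_right (by linarith) hlT0.le

end localfact2

section localfact3
open Complex Metric

lemma gh_re_inv {σ t : ℝ} {ρ : ℂ} :
    (1 / ((σ : ℂ) + t * I - ρ)).re = (σ - ρ.re) / ((σ - ρ.re) ^ 2 + (t - ρ.im) ^ 2) := by
  rw [one_div, Complex.inv_re, Complex.normSq_apply]
  simp
  ring_nf

lemma gh_int_re_inv {σ T : ℝ} {ρ : ℂ} (h : ρ.re < σ) :
    IntervalIntegrable (fun t : ℝ => (1 / ((σ : ℂ) + t * I - ρ)).re) volume T (T + 1) ∧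
    ∫ t in T..(T + 1), (1 / ((σ : ℂ) + t * I - ρ)).re ≤ Real.pi := by
  set a := σ - ρ.re with ha
  have ha0 : 0 < a := by linarith
  have hcont : Continuous (fun t : ℝ => a / (a ^ 2 + (t - ρ.im) ^ 2)) := by
    refine Continuous.div (by fun_prop) (by fun_prop) (fun t => by positivity)
  simp only [gh_re_inv]
  refine ⟨hcont.intervalIntegrable _ _, ?_⟩
  have hder : ∀ t ∈ uIcc T (T + 1), HasDerivAt (fun t : ℝ => Real.arctan ((t - ρ.im) / a))
      (a / (a ^ 2 + (t - ρ.im) ^ 2)) t := by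
    intro t _
    have h1 : HasDerivAt (fun t : ℝ => (t - ρ.im) / a) (1 / a) t :=
      ((hasDerivAt_id t).sub_const _).div_const _
    refine h1.arctan.congr_deriv ?_
    field_simp
  rw [intervalIntegral.integral_eq_sub_of_hasDerivAt hder (hcont.intervalIntegrable _ _)]
  have h1 := Real.arctan_lt_pi_div_two ((T + 1 - ρ.im) / a)
  have h2 := Real.neg_pi_div_two_lt_arctan ((T - ρ.im) / a)
  linarith

lemma GHGood.logDeriv_diffAt {f : ℂ → ℂ} {A : ℝ} (hG : GHGood f A) {s : ℂ} (hs : 1 / 2 < s.re) :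
    DifferentiableAt ℂ (logDeriv f) s :=
  (((hG.diff.contDiff (n := 2)).differentiable_deriv_two s).div (hG.diff s) (hG.nz s hs))

lemma GHGood.bound {f : ℂ → ℂ} {A : ℝ} (hG : GHGood f A) :
    ∃ C : ℝ, 0 < C ∧ ∀ s : ℂ, 1 / 2 < s.re → s.re ≤ 2 →
      ‖logDeriv f s‖ ≤ C * (1 + 1 / (s.re - 1 / 2)) * Real.log (|s.im| + 2) := by
  obtain ⟨C, hC, h⟩ := hG.local
  refine ⟨C, hC, fun s hs1 hs2 => ?_⟩
  obtain ⟨n, Z, hn, hZ, hb⟩ := h s.im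
  have h1 : ‖s - (2 + s.im * I)‖ ≤ 1.81 := by
    have : s - (2 + s.im * I) = ((s.re - 2 : ℝ) : ℂ) := by
      apply Complex.ext <;> simp
    rw [this, Complex.norm_real, Real.norm_eq_abs, abs_le]
    constructor <;> linarith
  have h2 := hb s h1 hs1
  have hpos : 0 < s.re - 1 / 2 := by linarith
  have h3 : ‖∑ i, 1 / (s - Z i)‖ ≤ n * (1 / (s.re - 1 / 2)) := by
    refine (norm_sum_le _ _).trans ?_
    calc _ ≤ ∑ i : Fin n, 1 / (s.re - 1 / 2) := by
          refine Finset.sum_le_sum fun i _ => ?_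
          rw [norm_div, norm_one]
          have : s.re - 1 / 2 ≤ ‖s - Z i‖ := by
            refine le_trans ?_ (Complex.re_le_norm _)
            simp only [sub_re]
            linarith [hZ i]
          gcongr
      _ = _ := by simp
  have h4 : (n : ℝ) * (1 / (s.re - 1 / 2)) ≤ C * Real.log (|s.im| + 2) * (1 / (s.re - 1 / 2)) := by gcongr
  calc ‖logDeriv f s‖ = ‖(logDeriv f s - ∑ i, 1 / (s - Z i)) + ∑ i, 1 / (s - Z i)‖ := by ring_nf
    _ ≤ _ := norm_add_le _ _
    _ ≤ _ := by linarith

lemma GHGood.int_re {f : ℂ → ℂ} {A : ℝ} (hG : GHGood f A) :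
    ∃ C : ℝ, 0 < C ∧ ∀ σ : ℝ, 1 / 2 < σ → σ ≤ 1 → ∀ T : ℝ,
      ∫ t in T..(T + 1), |(logDeriv f ((σ : ℂ) + t * I)).re| ≤ C * Real.log (|T| + 2) := by
  obtain ⟨C, hC, h⟩ := hG.local
  refine ⟨C + C * Real.pi, by positivity, fun σ hs1 hs2 T => ?_⟩
  obtain ⟨n, Z, hn, hZ, hb⟩ := h T
  have hlT0 : 0 ≤ Real.log (|T| + 2) := (Real.log_pos (by norm_num)).le.trans (gh_log_pos T)
  have hcont : Continuous (fun t : ℝ => |(logDeriv f ((σ : ℂ) + t * I)).re|) := by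
    rw [continuous_iff_continuousAt]
    intro t
    have h1 : ContinuousAt (fun t : ℝ => logDeriv f ((σ : ℂ) + t * I)) t := by
      refine ContinuousAt.comp (f := fun t : ℝ => (σ : ℂ) + t * I) (g := logDeriv f) ?_ (by fun_prop)
      exact (hG.logDeriv_diffAt (by simpa using hs1)).continuousAt
    exact (Complex.continuous_re.continuousAt.comp h1).abs
  have hIntg : ∀ i, IntervalIntegrable (fun t : ℝ => (1 / ((σ : ℂ) + t * I - Z i)).re) volume T (T + 1) :=
    fun i => (gh_int_re_inv (by linarith [hZ i])).1
  have hsumint : IntervalIntegrable (fun t : ℝ => ∑ i, (1 / ((σ : ℂ) + t * I - Z i)).re) volume T (T + 1) := by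
    have := IntervalIntegrable.sum Finset.univ (f := fun i => (fun t : ℝ => (1 / ((σ : ℂ) + t * I - Z i)).re)) (fun i _ => hIntg i)
    simpa [Finset.sum_fn] using this
  have hpt : ∀ t ∈ Icc T (T + 1), |(logDeriv f ((σ : ℂ) + t * I)).re| ≤
      C * Real.log (|T| + 2) + ∑ i, (1 / ((σ : ℂ) + t * I - Z i)).re := by
    intro t ht
    have h1 : ‖(σ : ℂ) + t * I - (2 + T * I)‖ ≤ 1.81 := by
      have : (σ : ℂ) + t * I - (2 + T * I) = ((σ - 2 : ℝ) : ℂ) + ((t - T : ℝ) : ℂ) * I := by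
        push_cast; ring
      rw [this, Complex.norm_add_mul_I, Real.sqrt_le_left (by norm_num)]
      have h1 := ht.1
      have h2 := ht.2
      nlinarith
    have h2 := hb _ h1 (by simpa using hs1)
    have h3 := (Complex.abs_re_le_norm _).trans h2
    rw [Complex.sub_re, Complex.re_sum] at h3
    have h4 : 0 ≤ ∑ i, (1 / ((σ : ℂ) + t * I - Z i)).re := by
      refine Finset.sum_nonneg fun i _ => ?_
      rw [gh_re_inv]
      have : 0 ≤ σ - (Z i).re := by linarith [hZ i]
      positivity
    rw [abs_le] at h3 ⊢
    constructor <;> linarith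
  calc _ ≤ ∫ t in T..(T + 1), (C * Real.log (|T| + 2) + ∑ i, (1 / ((σ : ℂ) + t * I - Z i)).re) := by
        refine intervalIntegral.integral_mono_on (by linarith) (hcont.intervalIntegrable _ _)
          (intervalIntegrable_const.add hsumint) hpt
    _ = C * Real.log (|T| + 2) + ∑ i, ∫ t in T..(T + 1), (1 / ((σ : ℂ) + t * I - Z i)).re := by
        rw [intervalIntegral.integral_add intervalIntegrable_const hsumint,
          intervalIntegral.integral_finsetSum (fun i _ => hIntg i)]
        simp
    _ ≤ C * Real.log (|T| + 2) + ∑ i : Fin n, Real.pi := by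
        gcongr with i _
        exact (gh_int_re_inv (by linarith [hZ i])).2
    _ = C * Real.log (|T| + 2) + n * Real.pi := by simp
    _ ≤ C * Real.log (|T| + 2) + C * Real.log (|T| + 2) * Real.pi := by gcongr
    _ = _ := by ring

end localfact3

section contour
open Complex Filter Topology

lemma gh_integrable_decay : Integrable (fun t : ℝ => (1 + |t|) ^ (-(3 / 2 : ℝ))) := by
  have := integrable_one_add_norm (E := ℝ) (μ := volume) (r := 3 / 2) (by norm_num)
  simpa using this

lemma gh_line_cont {H : ℂ → ℂ} {a : ℝ} (hd : ∀ t : ℝ, DifferentiableAt ℂ H (a + t * I)) :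
    Continuous (fun t : ℝ => H (a + t * I)) := by
  rw [continuous_iff_continuousAt]
  intro t
  exact ContinuousAt.comp (f := fun t : ℝ => (a : ℂ) + t * I) (g := H) (hd t).continuousAt (by fun_prop)

lemma gh_line_integrable {H : ℂ → ℂ} {a K : ℝ} (hd : ∀ t : ℝ, DifferentiableAt ℂ H (a + t * I))
    (hb : ∀ t : ℝ, ‖H (a + t * I)‖ ≤ K * (1 + |t|) ^ (-(3 / 2 : ℝ))) :
    Integrable (fun t : ℝ => H (a + t * I)) :=
  (gh_integrable_decay.const_mul K).mono' (gh_line_cont hd).aestronglyMeasurable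
    (Eventually.of_forall hb)

lemma gh_shift {H : ℂ → ℂ} {a b K : ℝ} (hab : a ≤ b)
    (hd : ∀ s : ℂ, a ≤ s.re → s.re ≤ b → DifferentiableAt ℂ H s)
    (hb : ∀ s : ℂ, a ≤ s.re → s.re ≤ b → ‖H s‖ ≤ K * (1 + |s.im|) ^ (-(3 / 2 : ℝ))) :
    ∫ t : ℝ, H (a + t * I) = ∫ t : ℝ, H (b + t * I) := by
  have hia : Integrable (fun t : ℝ => H (a + t * I)) :=
    gh_line_integrable (K := K) (fun t => hd _ (by simp) (by simpa)) (fun t => by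
      simpa using hb (a + t * I) (by simp) (by simpa))
  have hib : Integrable (fun t : ℝ => H (b + t * I)) :=
    gh_line_integrable (K := K) (fun t => hd _ (by simpa) (by simp)) (fun t => by
      simpa using hb (b + t * I) (by simpa) (by simp))
  have la := intervalIntegral_tendsto_integral hia tendsto_neg_atTop_atBot tendsto_id
  have lb := intervalIntegral_tendsto_integral hib tendsto_neg_atTop_atBot tendsto_id
  have hdecay : Tendsto (fun T : ℝ => K * (1 + |T|) ^ (-(3 / 2 : ℝ)) * |b - a|) atTop (𝓝 0) := by
    have h1 : Tendsto (fun T : ℝ => (1 + |T|) ^ (-(3 / 2 : ℝ))) atTop (𝓝 0) := by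
      refine (tendsto_rpow_neg_atTop (by norm_num : (0:ℝ) < 3 / 2)).comp ?_
      exact tendsto_atTop_add_const_left _ _ tendsto_abs_atTop_atTop
    simpa using (h1.const_mul K).mul_const |b - a|
  have hor : ∀ ε : ℝ → ℝ, (∀ T, |ε T| = |T|) →
      Tendsto (fun T : ℝ => ∫ x in a..b, H (x + (ε T : ℝ) * I)) atTop (𝓝 0) := by
    intro ε hε
    refine squeeze_zero_norm (fun T => ?_) hdecay
    refine intervalIntegral.norm_integral_le_of_norm_le_const fun x hx => ?_
    rw [uIoc_of_le hab] at hx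
    have := hb (x + (ε T : ℝ) * I) (by simpa using hx.1.le) (by simpa using hx.2)
    simpa [hε] using this
  have h1 := hor (fun T => -T) (fun T => abs_neg T)
  have h2 := hor (fun T => T) (fun T => rfl)
  have hrect : ∀ T : ℝ, ((∫ x in a..b, H (x + ((-T : ℝ) : ℂ) * I)) - ∫ x in a..b, H (x + (T : ℂ) * I))
      + I • (∫ y in (-T)..T, H (b + y * I)) - I • ∫ y in (-T)..T, H (a + y * I) = 0 := by
    intro T
    have := Complex.integral_boundary_rect_eq_zero_of_differentiableOn H ⟨a, -T⟩ ⟨b, T⟩ (by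
      intro s hs
      rw [mem_reProdIm] at hs
      have := hs.1
      rw [uIcc_of_le hab] at this
      exact (hd s this.1 this.2).differentiableWithinAt)
    simpa using this
  have hlim := ((h1.sub h2).add (lb.const_smul I)).sub (la.const_smul I)
  have hz : (0 - 0 + I • ∫ t : ℝ, H (b + t * I)) - I • ∫ t : ℝ, H (a + t * I) = 0 := by
    refine tendsto_nhds_unique (hlim.congr fun T => ?_) tendsto_const_nhds
    exact hrect T
  simp only [sub_zero, zero_add, smul_eq_mul] at hz
  rw [← mul_sub] at hz
  have := (mul_eq_zero.mp hz).resolve_left I_ne_zero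
  exact (sub_eq_zero.mp this).symm

end contour

section GHKernel
open Complex Filter Topology

lemma gh_norm_lower {s : ℂ} {a : ℝ} (ha : 0 < a) (ha1 : a ≤ 1) (hs : a ≤ s.re) :
    a / 2 * (1 + |s.im|) ≤ ‖s‖ := by
  have h1 := abs_re_le_norm s
  have h2 := abs_im_le_norm s
  have h3 := le_abs_self s.re
  have h4 := abs_nonneg s.im
  nlinarith

lemma gh_norm_add_one {s : ℂ} (hs : 0 ≤ s.re) : ‖s‖ ≤ ‖s + 1‖ := by
  rw [Complex.norm_def, Complex.norm_def]
  apply Real.sqrt_le_sqrt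
  rw [Complex.normSq_apply, Complex.normSq_apply]
  simp
  nlinarith

lemma gh_pow_decay (t : ℝ) : ((1 + |t|) ^ 2)⁻¹ ≤ (1 + |t|) ^ (-(3 / 2 : ℝ)) := by
  have h : (1:ℝ) ≤ 1 + |t| := by have := abs_nonneg t; linarith
  rw [← Real.rpow_natCast, ← Real.rpow_neg (by linarith)]
  apply Real.rpow_le_rpow_of_exponent_le h
  norm_num

lemma gh_inv_ss (s : ℂ) (hs : 1 ≤ s.re) :
    ‖1 / (s * (s + 1))‖ ≤ 4 * (1 + |s.im|) ^ (-(3 / 2 : ℝ)) := by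
  have h1 := gh_norm_lower one_pos le_rfl hs
  have h2 := gh_norm_add_one (s := s) (by linarith)
  have h0 := abs_nonneg s.im
  rw [norm_div, norm_one, norm_mul]
  calc 1 / (‖s‖ * ‖s + 1‖) ≤ 1 / ((1 / 2 * (1 + |s.im|)) * (1 / 2 * (1 + |s.im|))) := by
        apply one_div_le_one_div_of_le (by positivity)
        apply mul_le_mul h1 (h1.trans h2) (by positivity) (by positivity)
    _ = 4 * ((1 + |s.im|) ^ 2)⁻¹ := by field_simp; norm_num
    _ ≤ _ := by gcongr; exact gh_pow_decay _

lemma gh_integrable_ss : Integrable (fun t : ℝ => 1 / (((2:ℝ) + t * I : ℂ) * ((2:ℝ) + t * I + 1))) := by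
  apply gh_line_integrable (H := fun s => 1 / (s * (s + 1))) (K := 4)
  · intro t
    have h1 : ((2:ℝ) + t * I : ℂ) ≠ 0 := fun h => by simpa using congrArg re h
    have h2 : ((2:ℝ) + t * I + 1 : ℂ) ≠ 0 := fun h => by
      have := congrArg re h
      norm_num at this
    fun_prop (disch := exact mul_ne_zero h1 h2)
  · intro t
    simpa using gh_inv_ss ((2:ℝ) + t * I) (by simp)

lemma gh_integrable_sss : Integrable (fun t : ℝ =>
    1 / (((2:ℝ) + t * I - 1 : ℂ) * (((2:ℝ) + t * I : ℂ) * ((2:ℝ) + t * I + 1)))) := by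
  apply gh_line_integrable (H := fun s => 1 / ((s - 1) * (s * (s + 1)))) (K := 4)
  · intro t
    have h1 : ((2:ℝ) + t * I : ℂ) ≠ 0 := fun h => by simpa using congrArg re h
    have h2 : ((2:ℝ) + t * I + 1 : ℂ) ≠ 0 := fun h => by
      have := congrArg re h
      norm_num at this
    have h3 : ((2:ℝ) + t * I - 1 : ℂ) ≠ 0 := fun h => by
      have := congrArg re h
      norm_num at this
    fun_prop (disch := exact mul_ne_zero h3 (mul_ne_zero h1 h2))
  · intro t
    have h3 : 1 ≤ ‖((2:ℝ) + t * I - 1 : ℂ)‖ := by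
      refine le_trans ?_ (abs_re_le_norm _)
      norm_num
    have h4 := gh_inv_ss ((2:ℝ) + t * I) (by simp)
    have h5 : (|(((2:ℝ) + t * I : ℂ)).im|) = |t| := by simp
    rw [h5] at h4
    refine le_trans ?_ h4
    rw [← one_div_mul_one_div, norm_mul]
    refine mul_le_of_le_one_left (norm_nonneg _) ?_
    rw [norm_div, norm_one]
    exact (div_le_one (by linarith)).2 h3

lemma gh_k1 {u : ℝ} (hu : 0 < u) :
    ∫ t : ℝ, (u : ℂ) ^ (-((2:ℝ) + t * I : ℂ)) * (1 / (((2:ℝ) + t * I : ℂ) * ((2:ℝ) + t * I + 1)))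
      = 2 * Real.pi * (max (1 - u) 0 : ℝ) := by
  set f : ℝ → ℂ := fun t => indicator (Ioc 0 1) (fun _ => 1 : ℝ → ℂ) t
      - indicator (Ioc 0 1) (fun t => ↑t ^ (1:ℂ) : ℝ → ℂ) t with hf
  have hM : ∀ s : ℂ, 0 < s.re → HasMellin f s (1 / (s * (s + 1))) := by
    intro s hs
    have h1 := hasMellin_one_Ioc hs
    have h2 := hasMellin_cpow_Ioc 1 (s := s) (by simp; linarith)
    have h3 := hasMellin_sub h1.1 h2.1
    rw [h1.2, h2.2] at h3
    have h1 : s ≠ 0 := fun h => by simp [h] at hs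
    have h2 : s + 1 ≠ 0 := fun h => by
      have := congrArg re h
      simp at this
      linarith
    have heq : 1 / (s * (s + 1)) = 1 / s - 1 / (s + 1) := by
      field_simp
      ring
    rw [heq]
    exact h3
  have hfe : ∀ v : ℝ, 0 < v → f v = ((max (1 - v) 0 : ℝ) : ℂ) := by
    intro v hv
    by_cases h : v ≤ 1
    · simp [hf, h, hv]
    · push Not at h
      simp [hf, h.not_ge, max_eq_right (by linarith : 1 - v ≤ 0)]
  have hline : ∀ t : ℝ, mellin f ((2:ℝ) + t * I) = 1 / (((2:ℝ) + t * I : ℂ) * ((2:ℝ) + t * I + 1)) :=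
    fun t => (hM _ (by simp)).2
  have hc : ContinuousAt f u := by
    have h1 : ContinuousAt (fun v : ℝ => ((max (1 - v) 0 : ℝ) : ℂ)) u := by fun_prop
    refine h1.congr ?_
    filter_upwards [lt_mem_nhds hu] with v hv
    rw [hfe v hv]
  have hv : VerticalIntegrable (mellin f) 2 := by
    unfold VerticalIntegrable
    simp_rw [hline]
    exact gh_integrable_ss
  have := mellinInv_mellin_eq 2 f hu (hM _ (by simp)).1 hv hc
  rw [hfe u hu, mellinInv] at this
  simp_rw [hline, smul_eq_mul] at this
  rw [← this, Complex.real_smul, ← mul_assoc]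
  have hpi : (Real.pi : ℂ) ≠ 0 := by exact_mod_cast Real.pi_ne_zero
  push_cast
  rw [show (2 * (Real.pi:ℂ)) * (1 / (2 * (Real.pi:ℂ))) = 1 by field_simp, one_mul]

lemma gh_k2 {u : ℝ} (hu : 0 < u) (hu1 : u ≤ 1) :
    ∫ t : ℝ, (u : ℂ) ^ (-((2:ℝ) + t * I : ℂ)) *
      (1 / (((2:ℝ) + t * I - 1 : ℂ) * (((2:ℝ) + t * I : ℂ) * ((2:ℝ) + t * I + 1))))
      = 2 * Real.pi * ((1 - u) ^ 2 / (2 * u) : ℝ) := by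
  set f : ℝ → ℂ := fun t => (1 / 2 : ℂ) • (indicator (Ioc 0 1) (fun t => ↑t ^ (-1:ℂ) : ℝ → ℂ) t
      + indicator (Ioc 0 1) (fun t => ↑t ^ (1:ℂ) : ℝ → ℂ) t)
      - indicator (Ioc 0 1) (fun _ => 1 : ℝ → ℂ) t with hf
  have hM : ∀ s : ℂ, 1 < s.re → HasMellin f s (1 / ((s - 1) * (s * (s + 1)))) := by
    intro s hs
    have h1 := hasMellin_one_Ioc (s := s) (by linarith)
    have h2 := hasMellin_cpow_Ioc 1 (s := s) (by simp; linarith)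
    have h2' := hasMellin_cpow_Ioc (-1) (s := s) (by simp; linarith)
    have h3 := hasMellin_add h2'.1 h2.1
    have h4 := hasMellin_const_smul h3.1 (1 / 2 : ℂ)
    have h5 := hasMellin_sub h4.1 h1.1
    rw [h4.2, h3.2, h2'.2, h2.2, h1.2] at h5
    have h1 : s ≠ 0 := fun h => by simp [h] at hs; linarith
    have h2 : s + 1 ≠ 0 := fun h => by
      have := congrArg re h
      simp at this
      linarith
    have h3 : s - 1 ≠ 0 := fun h => by
      have := congrArg re h
      simp at this
      linarith
    have heq : 1 / ((s - 1) * (s * (s + 1))) = (1 / 2 : ℂ) • (1 / (s + -1) + 1 / (s + 1)) - 1 / s := by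
      rw [← sub_eq_add_neg, smul_eq_mul]
      field_simp
      ring
    rw [heq]
    exact h5
  have hfe : ∀ v : ℝ, 0 < v → f v = (((max (1 - v) 0) ^ 2 / (2 * v) : ℝ) : ℂ) := by
    intro v hv
    have hv' : (v : ℂ) ≠ 0 := by exact_mod_cast hv.ne'
    by_cases h : v ≤ 1
    · simp [hf, h, hv, cpow_neg_one]
      field_simp
      ring
    · push Not at h
      simp [hf, h.not_ge, max_eq_right (by linarith : 1 - v ≤ 0)]
  have hline : ∀ t : ℝ, mellin f ((2:ℝ) + t * I) =
      1 / (((2:ℝ) + t * I - 1 : ℂ) * (((2:ℝ) + t * I : ℂ) * ((2:ℝ) + t * I + 1))) :=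
    fun t => (hM _ (by simp)).2
  have hc : ContinuousAt f u := by
    have h1 : ContinuousAt (fun v : ℝ => (((max (1 - v) 0) ^ 2 / (2 * v) : ℝ) : ℂ)) u := by
      apply ContinuousAt.comp (g := Complex.ofReal) (by fun_prop)
      apply ContinuousAt.div (by fun_prop) (by fun_prop) (by positivity)
    refine h1.congr ?_
    filter_upwards [lt_mem_nhds hu] with v hv
    rw [hfe v hv]
  have hv : VerticalIntegrable (mellin f) 2 := by
    unfold VerticalIntegrable
    simp_rw [hline]
    exact gh_integrable_sss
  have := mellinInv_mellin_eq 2 f hu (hM _ (by simp)).1 hv hc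
  rw [hfe u hu, mellinInv, max_eq_left (by linarith)] at this
  simp_rw [hline, smul_eq_mul] at this
  rw [← this, Complex.real_smul, ← mul_assoc]
  have hpi : (Real.pi : ℂ) ≠ 0 := by exact_mod_cast Real.pi_ne_zero
  push_cast
  rw [show (2 * (Real.pi:ℂ)) * (1 / (2 * (Real.pi:ℂ))) = 1 by field_simp, one_mul]
end GHKernel

section GHKernel2
open Complex Filter Topology

noncomputable def ghP (Y : ℝ) (s : ℂ) : ℂ := (Y : ℂ) ^ (s + 1) / (s * (s + 1))
noncomputable def ghW (x h : ℝ) (s : ℂ) : ℂ := (ghP (x + h) s - ghP x s) / h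

lemma gh_P_eq {Y v : ℝ} (hY : 0 < Y) (hv : 0 < v) (s : ℂ) :
    ghP Y s * (v : ℂ) ^ (-s) = Y * (((v / Y : ℝ) : ℂ) ^ (-s) * (1 / (s * (s + 1)))) := by
  have hY' : (Y : ℂ) ≠ 0 := by exact_mod_cast hY.ne'
  have hv' : (v : ℂ) ≠ 0 := by exact_mod_cast hv.ne'
  have h1 : ((v / Y : ℝ) : ℂ) ^ (-s) = (v : ℂ) ^ (-s) * (Y : ℂ) ^ s := by
    rw [div_eq_mul_inv, ofReal_mul, mul_cpow_ofReal_nonneg hv.le (inv_nonneg.2 hY.le), ofReal_inv,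
      inv_cpow _ _ (by rw [arg_ofReal_of_nonneg hY.le]; exact Real.pi_ne_zero.symm), cpow_neg _ s, cpow_neg _ s, inv_inv]
  rw [h1, ghP, cpow_add _ _ hY', cpow_one]
  ring

lemma gh_integrable_cpow_mul {u : ℝ} (hu : 0 < u) {g : ℝ → ℂ} (hg : Integrable g) :
    Integrable (fun t : ℝ => (u : ℂ) ^ (-((2:ℝ) + t * I : ℂ)) * g t) := by
  apply hg.bdd_mul (c := u ^ (-2:ℝ))
  · apply Continuous.aestronglyMeasurable
    have : (u:ℂ) ≠ 0 := by exact_mod_cast hu.ne'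
    have : NeZero (u:ℂ) := ⟨this⟩
    fun_prop
  · refine Eventually.of_forall fun t => ?_
    rw [norm_cpow_eq_rpow_re_of_pos hu]
    simp

lemma gh_P1i {Y v : ℝ} (hY : 0 < Y) (hv : 0 < v) :
    Integrable (fun t : ℝ => ghP Y ((2:ℝ) + t * I) * (v : ℂ) ^ (-((2:ℝ) + t * I : ℂ))) := by
  simp_rw [gh_P_eq hY hv]
  exact (gh_integrable_cpow_mul (div_pos hv hY) gh_integrable_ss).const_mul _

lemma gh_P1 {Y v : ℝ} (hY : 0 < Y) (hv : 0 < v) :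
    ∫ t : ℝ, ghP Y ((2:ℝ) + t * I) * (v : ℂ) ^ (-((2:ℝ) + t * I : ℂ))
      = 2 * Real.pi * (max (Y - v) 0 : ℝ) := by
  simp_rw [gh_P_eq hY hv]
  rw [integral_const_mul, gh_k1 (div_pos hv hY)]
  have : max (Y - v) 0 = Y * max (1 - v / Y) 0 := by
    rw [mul_max_of_nonneg _ _ hY.le, mul_zero]
    congr 1
    field_simp
  rw [this]
  push_cast
  ring

lemma gh_P2_eq {Y : ℝ} (hY : 0 < Y) (s : ℂ) :
    ghP Y s * (1 / (s - 1)) =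
      Y * (((1 / Y : ℝ) : ℂ) ^ (-s) * (1 / ((s - 1) * (s * (s + 1))))) := by
  have := gh_P_eq hY one_pos s
  rw [ofReal_one, one_cpow, mul_one] at this
  rw [this]
  simp only [one_div, mul_inv]
  ring

lemma gh_P2i {Y : ℝ} (hY : 0 < Y) :
    Integrable (fun t : ℝ => ghP Y ((2:ℝ) + t * I) * (1 / (((2:ℝ) + t * I : ℂ) - 1))) := by
  simp_rw [gh_P2_eq hY]
  exact (gh_integrable_cpow_mul (div_pos one_pos hY) gh_integrable_sss).const_mul _

lemma gh_P2 {Y : ℝ} (hY : 1 ≤ Y) :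
    ∫ t : ℝ, ghP Y ((2:ℝ) + t * I) * (1 / (((2:ℝ) + t * I : ℂ) - 1))
      = 2 * Real.pi * ((Y - 1) ^ 2 / 2 : ℝ) := by
  have hY0 : 0 < Y := by linarith
  simp_rw [gh_P2_eq hY0]
  rw [integral_const_mul, gh_k2 (div_pos one_pos hY0) ((div_le_one hY0).2 hY)]
  have : (Y - 1) ^ 2 / 2 = Y * ((1 - 1 / Y) ^ 2 / (2 * (1 / Y))) := by
    field_simp
  rw [this]
  push_cast
  ring

noncomputable def ghw (x h v : ℝ) : ℝ := (max (x + h - v) 0 - max (x - v) 0) / h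

lemma gh_W1i {x h v : ℝ} (hx : 0 < x) (hh : 0 < h) (hv : 0 < v) :
    Integrable (fun t : ℝ => ghW x h ((2:ℝ) + t * I) * (v : ℂ) ^ (-((2:ℝ) + t * I : ℂ))) := by
  have := ((gh_P1i (Y := x + h) (by positivity) hv).sub (gh_P1i hx hv)).const_mul (1 / h : ℂ)
  convert this using 2
  simp [ghW]
  ring

lemma gh_W1 {x h v : ℝ} (hx : 0 < x) (hh : 0 < h) (hv : 0 < v) :
    ∫ t : ℝ, ghW x h ((2:ℝ) + t * I) * (v : ℂ) ^ (-((2:ℝ) + t * I : ℂ)) = 2 * Real.pi * ghw x h v := by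
  have : ∀ s : ℂ, ghW x h s * (v : ℂ) ^ (-s) =
    (1 / h : ℂ) * (ghP (x + h) s * (v : ℂ) ^ (-s) - ghP x s * (v : ℂ) ^ (-s)) := by
    intro s
    simp [ghW]
    ring
  simp_rw [this]
  rw [integral_const_mul, integral_sub (gh_P1i (by positivity) hv) (gh_P1i hx hv),
    gh_P1 (by positivity) hv, gh_P1 hx hv, ghw]
  push_cast
  ring

lemma gh_W2i {x h : ℝ} (hx : 0 < x) (hh : 0 < h) :
    Integrable (fun t : ℝ => ghW x h ((2:ℝ) + t * I) * (1 / (((2:ℝ) + t * I : ℂ) - 1))) := by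
  have := ((gh_P2i (Y := x + h) (by positivity)).sub (gh_P2i hx)).const_mul (1 / h : ℂ)
  convert this using 2
  simp [ghW]
  ring

lemma gh_W2 {x h : ℝ} (hx : 1 ≤ x) (hh : 0 < h) :
    ∫ t : ℝ, ghW x h ((2:ℝ) + t * I) * (1 / (((2:ℝ) + t * I : ℂ) - 1)) =
      2 * Real.pi * ((x - 1 + h / 2 : ℝ) : ℂ) := by
  have : ∀ s : ℂ, ghW x h s * (1 / (s - 1)) =
    (1 / h : ℂ) * (ghP (x + h) s * (1 / (s - 1)) - ghP x s * (1 / (s - 1))) := by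
    intro s
    simp [ghW]
    ring
  have hx0 : 0 < x := by linarith
  have hh' : (h : ℂ) ≠ 0 := by exact_mod_cast hh.ne'
  simp_rw [this]
  rw [integral_const_mul, integral_sub (gh_P2i (by positivity)) (gh_P2i hx0),
    gh_P2 (by linarith), gh_P2 hx]
  push_cast
  field_simp
  ring

lemma gh_P_diff {Y : ℝ} (hY : 0 < Y) {s : ℂ} (hs : 0 < s.re) : DifferentiableAt ℂ (ghP Y) s := by
  have hY' : (Y : ℂ) ≠ 0 := by exact_mod_cast hY.ne'
  have h1 : s ≠ 0 := fun h => by simp [h] at hs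
  have h2 : s + 1 ≠ 0 := fun h => by
    have := congrArg re h
    simp at this
    linarith
  unfold ghP
  apply DifferentiableAt.div
  · exact DifferentiableAt.const_cpow (by fun_prop) (Or.inl hY')
  · fun_prop
  · exact mul_ne_zero h1 h2

lemma gh_W_diff {x h : ℝ} (hx : 0 < x) (hh : 0 < h) {s : ℂ} (hs : 0 < s.re) :
    DifferentiableAt ℂ (ghW x h) s :=
  ((gh_P_diff (by positivity) hs).sub (gh_P_diff hx hs)).div_const _

lemma gh_P_conj {Y : ℝ} (hY : 0 < Y) (s : ℂ) :
    ghP Y (starRingEnd ℂ s) = starRingEnd ℂ (ghP Y s) := by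
  have harg : arg (Y : ℂ) ≠ Real.pi := by
    rw [arg_ofReal_of_nonneg hY.le]; exact Real.pi_ne_zero.symm
  have := cpow_conj (Y : ℂ) (s + 1) harg
  simp only [ghP, map_div₀, map_mul, map_add, map_one]
  simp only [map_add, map_one, conj_ofReal] at this
  rw [this]

lemma gh_W_conj {x h : ℝ} (hx : 0 < x) (hh : 0 < h) (s : ℂ) :
    ghW x h (starRingEnd ℂ s) = starRingEnd ℂ (ghW x h s) := by
  simp [ghW, gh_P_conj hx, gh_P_conj (add_pos hx hh)]

lemma gh_W_bound1 {x h : ℝ} (hx : 0 < x) (hh : 0 < h) {s : ℂ} (hs : 0 < s.re) :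
    ‖ghW x h s‖ ≤ (x + h) ^ s.re / ‖s‖ := by
  have h1 : s ≠ 0 := fun h => by simp [h] at hs
  have h2 : s + 1 ≠ 0 := fun h => by
    have := congrArg re h
    simp at this
    linarith
  have hh' : (h : ℂ) ≠ 0 := by exact_mod_cast hh.ne'
  have hIntg : ∫ u in x..(x + h), (u : ℂ) ^ s = ((x + h : ℝ) ^ (s + 1) - (x : ℂ) ^ (s + 1)) / (s + 1) := by
    rw [integral_cpow (Or.inl (by linarith))]
  have hW : ghW x h s = (∫ u in x..(x + h), (u : ℂ) ^ s) / (h * s) := by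
    rw [hIntg, ghW, ghP, ghP]
    field_simp
  have hb : ‖∫ u in x..(x + h), (u : ℂ) ^ s‖ ≤ (x + h) ^ s.re * |x + h - x| := by
    apply intervalIntegral.norm_integral_le_of_norm_le_const
    intro u hu
    rw [uIoc_of_le (by linarith)] at hu
    rw [norm_cpow_eq_rpow_re_of_pos (by linarith [hu.1])]
    exact Real.rpow_le_rpow (by linarith [hu.1]) hu.2 hs.le
  rw [show x + h - x = h by ring, abs_of_pos hh] at hb
  rw [hW, norm_div, norm_mul, norm_real, Real.norm_of_nonneg hh.le]
  have hs0 : 0 < ‖s‖ := norm_pos_iff.2 h1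
  rw [div_le_div_iff₀ (by positivity) hs0]
  nlinarith

lemma gh_W_bound2 {x h : ℝ} (hx : 0 < x) (hh : 0 < h) {s : ℂ} (hs : 0 < s.re) :
    ‖ghW x h s‖ ≤ 2 * (x + h) ^ (s.re + 1) / (h * ‖s‖ ^ 2) := by
  have h1 : s ≠ 0 := fun h => by simp [h] at hs
  have hs0 : 0 < ‖s‖ := norm_pos_iff.2 h1
  have key : ∀ Y : ℝ, 0 < Y → Y ≤ x + h → ‖ghP Y s‖ ≤ (x + h) ^ (s.re + 1) / ‖s‖ ^ 2 := by
    intro Y hY hYx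
    rw [ghP, norm_div, norm_mul, norm_cpow_eq_rpow_re_of_pos hY]
    apply div_le_div₀ (by positivity)
    · simp only [add_re, one_re]
      exact Real.rpow_le_rpow hY.le hYx (by linarith)
    · positivity
    · rw [sq]
      exact mul_le_mul_of_nonneg_left (gh_norm_add_one hs.le) hs0.le
  rw [ghW, norm_div, norm_real, Real.norm_of_nonneg hh.le]
  calc _ ≤ (‖ghP (x + h) s‖ + ‖ghP x s‖) / h := by gcongr; exact norm_sub_le _ _
    _ ≤ ((x + h) ^ (s.re + 1) / ‖s‖ ^ 2 + (x + h) ^ (s.re + 1) / ‖s‖ ^ 2) / h := by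
        gcongr
        · exact key _ (by positivity) le_rfl
        · exact key _ hx (by linarith)
    _ = _ := by field_simp; ring

lemma gh_log_sqrt (t : ℝ) : Real.log (|t| + 2) ≤ 3 * (1 + |t|) ^ (1 / 2 : ℝ) := by
  have h0 := abs_nonneg t
  have h1 := Real.log_le_rpow_div (x := |t| + 2) (ε := 1 / 2) (by linarith) (by norm_num)
  have h2 : (|t| + 2) ^ (1 / 2 : ℝ) ≤ (2 * (1 + |t|)) ^ (1 / 2 : ℝ) :=
    Real.rpow_le_rpow (by linarith) (by linarith) (by norm_num)
  rw [Real.mul_rpow (by norm_num) (by linarith), ← Real.sqrt_eq_rpow 2] at h2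
  have h3 : Real.sqrt 2 ≤ 3 / 2 := by
    rw [Real.sqrt_le_left (by norm_num)]; norm_num
  have h4 : 0 ≤ (1 + |t|) ^ (1 / 2 : ℝ) := by positivity
  rw [div_eq_mul_inv] at h1
  norm_num at h1 h2 h4 ⊢
  nlinarith
end GHKernel2

section GHE1
open Complex Filter Topology

lemma gh_integrable_pow {η : ℝ} (hη : 0 < η) :
    Integrable (fun t : ℝ => (1 + |t|) ^ (-1 - η)) := by
  have := integrable_one_add_norm (E := ℝ) (μ := volume) (r := 1 + η) (by simp; linarith)
  rw [neg_add, ← sub_eq_add_neg] at this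
  simpa using this

lemma gh_integral_pow {η : ℝ} (hη : 0 < η) :
    ∫ t : ℝ, (1 + |t|) ^ (-1 - η) = 2 / η := by
  rw [integral_comp_abs (f := fun t => (1 + t) ^ (-1 - η))]
  have h := (measurePreserving_add_left volume (1:ℝ)).setIntegral_preimage_emb
    (measurableEmbedding_addLeft 1) (fun t => t ^ (-1 - η)) (Ioi 1)
  have h2 : (fun t : ℝ => 1 + t) ⁻¹' (Ioi 1) = Ioi 0 := by ext; simp
  rw [h2] at h
  rw [h, integral_Ioi_rpow_of_lt (by linarith) one_pos]
  rw [Real.one_rpow, show -1 - η + 1 = -η by ring]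
  field_simp

lemma gh_pow_compare {η : ℝ} (hη : 0 < η) (hη1 : η ≤ 1) {s t : ℝ} (h : |s - t| ≤ 1) :
    (1 + |t|) ^ (-1 - η) ≤ 4 * (1 + |s|) ^ (-1 - η) := by
  have h0 := abs_nonneg t
  have h0' := abs_nonneg s
  have h1 : (1 + |s|) / 2 ≤ 1 + |t| := by
    have := abs_sub_abs_le_abs_sub s t
    linarith
  have h2 := Real.rpow_le_rpow_of_nonpos (by positivity : 0 < (1 + |s|) / 2) h1 (by linarith : -1 - η ≤ 0)
  refine h2.trans ?_
  rw [Real.div_rpow (by positivity) (by norm_num), div_eq_mul_inv, mul_comm, ← Real.rpow_neg (by norm_num)]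
  gcongr
  calc (2:ℝ) ^ (-(-1 - η)) ≤ (2:ℝ) ^ (2:ℝ) :=
        Real.rpow_le_rpow_of_exponent_le (by norm_num) (by linarith)
    _ = 4 := by norm_num

lemma gh_log_pow {δ : ℝ} (hδ : 0 < δ) (hδ1 : δ ≤ 1) (T : ℝ) :
    Real.log (|T| + 2) ≤ 4 / δ * (1 + |T|) ^ (δ / 2) := by
  have h0 := abs_nonneg T
  have h1 := Real.log_le_rpow_div (x := |T| + 2) (ε := δ / 2) (by linarith) (by positivity)
  have h2 : (|T| + 2) ^ (δ / 2) ≤ (2 * (1 + |T|)) ^ (δ / 2) :=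
    Real.rpow_le_rpow (by linarith) (by linarith) (by positivity)
  rw [Real.mul_rpow (by norm_num) (by linarith)] at h2
  have h3 : (2:ℝ) ^ (δ / 2) ≤ 2 := by
    calc (2:ℝ) ^ (δ / 2) ≤ (2:ℝ) ^ (1:ℝ) :=
        Real.rpow_le_rpow_of_exponent_le (by norm_num) (by linarith)
      _ = 2 := by norm_num
  have h4 : 0 ≤ (1 + |T|) ^ (δ / 2) := by positivity
  calc _ ≤ _ := h1
    _ ≤ (2 * (1 + |T|) ^ (δ / 2)) / (δ / 2) := by
      gcongr
      exact h2.trans (by gcongr)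
    _ = _ := by field_simp; norm_num

lemma gh_window {φ : ℝ → ℝ} (hc : Continuous φ) (h0 : ∀ t, 0 ≤ φ t) {C : ℝ}
    (hC : ∀ T : ℝ, ∫ t in T..(T + 1), φ t ≤ C * Real.log (|T| + 2)) (hC0 : 0 ≤ C)
    {δ : ℝ} (hδ : 0 < δ) (hδ1 : δ ≤ 1)
    (hi : Integrable (fun t => φ t * (1 + |t|) ^ (-1 - δ))) :
    ∫ t, φ t * (1 + |t|) ^ (-1 - δ) ≤ 256 * C / δ ^ 2 := by
  have s1 := hi.hasSum_intervalIntegral 0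
  have s2 := ((gh_integrable_pow (half_pos hδ)).const_mul (64 * C / δ)).hasSum_intervalIntegral 0
  have hcp : ∀ η : ℝ, Continuous (fun t : ℝ => (1 + |t|) ^ η) := by
    intro η
    apply Continuous.rpow_const (by fun_prop)
    intro t
    left
    have := abs_nonneg t
    positivity
  have key := hasSum_le (fun n => ?_) s1 s2
  · rw [integral_const_mul, gh_integral_pow (half_pos hδ)] at key
    refine key.trans (le_of_eq ?_)
    field_simp
    norm_num
    ring
  · set T : ℝ := 0 + (n:ℝ)
    have e1 : ∫ t in T..(T + 1), φ t * (1 + |t|) ^ (-1 - δ) ≤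
        ∫ t in T..(T + 1), φ t * (4 * (1 + |T|) ^ (-1 - δ)) := by
      apply intervalIntegral.integral_mono_on (by linarith)
      · exact (hc.mul (hcp _)).intervalIntegrable _ _
      · exact (hc.mul continuous_const).intervalIntegrable _ _
      · intro t ht
        refine mul_le_mul_of_nonneg_left (gh_pow_compare hδ hδ1 ?_) (h0 t)
        rw [abs_le]; constructor <;> linarith [ht.1, ht.2]
    have e2 : (64 * C / δ) * (1 / 4 * (1 + |T|) ^ (-1 - δ / 2)) ≤
        ∫ t in T..(T + 1), 64 * C / δ * (1 + |t|) ^ (-1 - δ / 2) := by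
      have : ∫ t in T..(T + 1), (64 * C / δ) * (1 / 4 * (1 + |T|) ^ (-1 - δ / 2)) =
        (64 * C / δ) * (1 / 4 * (1 + |T|) ^ (-1 - δ / 2)) := by simp
      rw [← this]
      apply intervalIntegral.integral_mono_on (by linarith)
      · exact continuous_const.intervalIntegrable _ _
      · exact (continuous_const.mul (hcp _)).intervalIntegrable _ _
      · intro t ht
        refine mul_le_mul_of_nonneg_left ?_ (by positivity)
        have := gh_pow_compare (η := δ / 2) (by positivity) (by linarith) (s := t) (t := T) (by
          rw [abs_le]; constructor <;> linarith [ht.1, ht.2])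
        linarith
    refine e1.trans (le_trans ?_ e2)
    rw [intervalIntegral.integral_mul_const]
    have hp : 0 ≤ 4 * (1 + |T|) ^ (-1 - δ) := by positivity
    calc _ ≤ (C * (4 / δ * (1 + |T|) ^ (δ / 2))) * (4 * (1 + |T|) ^ (-1 - δ)) := by
          refine mul_le_mul_of_nonneg_right ((hC T).trans ?_) hp
          exact mul_le_mul_of_nonneg_left (gh_log_pow hδ hδ1 T) hC0
      _ = (16 * C / δ) * ((1 + |T|) ^ (δ / 2) * (1 + |T|) ^ (-1 - δ)) := by ring
      _ = _ := by
          rw [← Real.rpow_add (by positivity)]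
          rw [show δ / 2 + (-1 - δ) = -1 - δ / 2 by ring]
          ring

lemma gh_W_interp {x : ℝ} (hx : Real.exp 1 ≤ x) {s : ℂ} (hs : 1 / 4 ≤ s.re) (hs1 : s.re ≤ 1) :
    ‖ghW x (Real.sqrt x) s‖ ≤ 1024 * x ^ s.re * (1 + |s.im|) ^ (-1 - 1 / Real.log x) := by
  have hx1 : 1 < x := lt_of_lt_of_le (by have := Real.add_one_lt_exp (one_ne_zero); linarith) hx
  have hx0 : 0 < x := by linarith
  have hlog : 1 ≤ Real.log x := by rwa [Real.le_log_iff_exp_le hx0]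
  set δ := 1 / Real.log x with hδ
  have hδ0 : 0 < δ := by positivity
  have hδ1 : δ ≤ 1 := by rw [hδ, div_le_one (by linarith)]; exact hlog
  have hsq : 0 < Real.sqrt x := Real.sqrt_pos.2 hx0
  have hsqx : Real.sqrt x ≤ x := by
    rw [Real.sqrt_le_left hx0.le]; nlinarith
  have hsq2 : Real.sqrt x * Real.sqrt x = x := Real.mul_self_sqrt hx0.le
  have ht := abs_nonneg s.im
  set u := 1 + |s.im| with hu
  have hu1 : 1 ≤ u := by linarith
  have hn := gh_norm_lower (a := 1 / 4) (by norm_num) (by norm_num) hs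
  rw [← hu] at hn
  have hsp : 0 < ‖s‖ := by nlinarith
  set M := x ^ s.re with hM
  have hM0 : 0 < M := by positivity
  have hpow1 : (x + Real.sqrt x) ^ s.re ≤ 2 * M := by
    calc (x + Real.sqrt x) ^ s.re ≤ (2 * x) ^ s.re :=
          Real.rpow_le_rpow (by positivity) (by linarith) (by linarith)
      _ = 2 ^ s.re * M := by rw [Real.mul_rpow (by norm_num) hx0.le]
      _ ≤ 2 * M := by
        gcongr
        calc (2:ℝ) ^ s.re ≤ (2:ℝ) ^ (1:ℝ) :=
            Real.rpow_le_rpow_of_exponent_le (by norm_num) hs1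
          _ = 2 := by norm_num
  have b1 : ‖ghW x (Real.sqrt x) s‖ ≤ 512 * M / u := by
    refine (gh_W_bound1 hx0 hsq (by linarith)).trans ?_
    rw [div_le_div_iff₀ hsp (by positivity)]
    calc _ ≤ (2 * M) * (8 * ‖s‖) := by gcongr; linarith
      _ ≤ _ := by nlinarith [mul_pos hM0 hsp]
  have b2 : ‖ghW x (Real.sqrt x) s‖ ≤ 512 * M * Real.sqrt x / u ^ 2 := by
    refine (gh_W_bound2 hx0 hsq (by linarith)).trans ?_
    rw [Real.rpow_add (by positivity), Real.rpow_one]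
    rw [div_le_div_iff₀ (by positivity) (by positivity)]
    calc _ ≤ 2 * ((2 * M) * (2 * x)) * (8 * ‖s‖) ^ 2 := by
          gcongr <;> linarith
      _ = 512 * M * (Real.sqrt x * Real.sqrt x) * ‖s‖ ^ 2 := by rw [hsq2]; ring
      _ = _ := by ring
  have hW0 := norm_nonneg (ghW x (Real.sqrt x) s)
  have c1 : ‖ghW x (Real.sqrt x) s‖ ≤ (512 * M / u) ^ (1 - δ) * (512 * M * Real.sqrt x / u ^ 2) ^ δ := by
    calc ‖ghW x (Real.sqrt x) s‖ = ‖ghW x (Real.sqrt x) s‖ ^ (1 - δ) * ‖ghW x (Real.sqrt x) s‖ ^ δ := by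
          rw [← Real.rpow_add' hW0 (by simp)]; simp
      _ ≤ _ := by
        have : 0 ≤ 1 - δ := by linarith
        gcongr
  refine c1.trans ?_
  have c2 : (512 * M * Real.sqrt x / u ^ 2) = (512 * M / u) * (Real.sqrt x / u) := by ring
  rw [c2, Real.mul_rpow (by positivity) (by positivity), ← mul_assoc, ← Real.rpow_add (by positivity),
    sub_add_cancel, Real.rpow_one, Real.div_rpow hsq.le (by positivity)]
  have c3 : Real.sqrt x ^ δ ≤ 2 := by
    rw [Real.sqrt_eq_rpow, ← Real.rpow_mul hx0.le, Real.rpow_def_of_pos hx0, hδ]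
    rw [show Real.log x * (1 / 2 * (1 / Real.log x)) = 1 / 2 by field_simp]
    have : Real.exp (1 / 2) ^ 2 ≤ 2 ^ 2 := by
      rw [← Real.exp_nat_mul]
      norm_num
      linarith [Real.exp_one_lt_d9]
    exact (pow_le_pow_iff_left₀ (by positivity) (by norm_num) (by norm_num)).1 this
  have c4 : u ^ (-1 - δ) = 1 / u * (1 / u ^ δ) := by
    rw [sub_eq_add_neg, Real.rpow_add (by positivity), Real.rpow_neg (by positivity), Real.rpow_neg (by positivity),
      Real.rpow_one]
    simp
  rw [c4]
  calc _ = (512 * M) * Real.sqrt x ^ δ * (1 / u * (1 / u ^ δ)) := by ring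
    _ ≤ (512 * M) * 2 * (1 / u * (1 / u ^ δ)) := by gcongr
    _ = _ := by ring
end GHE1

section GHE2
open Complex Filter Topology

lemma GHGood.prod_bound {f : ℂ → ℂ} {A : ℝ} (hG : GHGood f A) {a b x h : ℝ} (ha : 1 / 2 < a)
    (hb : 0 < b) (hb1 : b ≤ 1) (hx : 1 ≤ x) (hh : 0 < h) :
    ∃ K : ℝ, ∀ s z : ℂ, a ≤ s.re → s.re ≤ 2 → b ≤ z.re → z.re ≤ 2 → |z.im| = |s.im| →
      ‖logDeriv f s * ghW x h z‖ ≤ K * (1 + |s.im|) ^ (-(3 / 2 : ℝ)) := by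
  obtain ⟨C, hC, hbd⟩ := hG.bound
  refine ⟨C * (1 + 1 / (a - 1 / 2)) * 3 * (2 * (x + h) ^ (3:ℝ) / (h * (b / 2) ^ 2)), ?_⟩
  intro s z hs hs2 hz hz2 him
  have h0 := abs_nonneg s.im
  set u := 1 + |s.im| with hu
  have hu0 : 0 < u := by linarith
  have h1 : ‖logDeriv f s‖ ≤ C * (1 + 1 / (a - 1 / 2)) * (3 * u ^ (1 / 2 : ℝ)) := by
    refine (hbd s (by linarith) hs2).trans ?_
    have e1 : 1 / (s.re - 1 / 2) ≤ 1 / (a - 1 / 2) :=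
      one_div_le_one_div_of_le (by linarith) (by linarith)
    have e2 := gh_log_sqrt s.im
    have e3 := gh_log_pos s.im
    have e4 : 0 < 1 / (a - 1 / 2) := one_div_pos.2 (by linarith)
    have e5 : 0 ≤ Real.log (|s.im| + 2) := Real.log_nonneg (by linarith)
    gcongr
  have h2 : ‖ghW x h z‖ ≤ (2 * (x + h) ^ (3:ℝ) / (h * (b / 2) ^ 2)) * (u ^ 2)⁻¹ := by
    refine (gh_W_bound2 (by linarith) hh (by linarith)).trans ?_
    have hn := gh_norm_lower hb hb1 hz
    rw [him, ← hu] at hn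
    have e1 : (x + h) ^ (z.re + 1) ≤ (x + h) ^ (3:ℝ) :=
      Real.rpow_le_rpow_of_exponent_le (by linarith) (by linarith)
    calc 2 * (x + h) ^ (z.re + 1) / (h * ‖z‖ ^ 2) ≤ 2 * (x + h) ^ (3:ℝ) / (h * (b / 2 * u) ^ 2) := by
          have : 0 < x + h := by linarith
          gcongr
      _ = _ := by
        field_simp
  rw [norm_mul]
  have e4 : 0 < 1 / (a - 1 / 2) := one_div_pos.2 (by linarith)
  have hxh : 0 < x + h := by linarith
  calc _ ≤ (C * (1 + 1 / (a - 1 / 2)) * (3 * u ^ (1 / 2 : ℝ))) *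
        ((2 * (x + h) ^ (3:ℝ) / (h * (b / 2) ^ 2)) * (u ^ 2)⁻¹) := by gcongr
    _ = (C * (1 + 1 / (a - 1 / 2)) * 3 * (2 * (x + h) ^ (3:ℝ) / (h * (b / 2) ^ 2))) *
        (u ^ (1 / 2 : ℝ) * (u ^ 2)⁻¹) := by ring
    _ = _ := by
      congr 1
      rw [← Real.rpow_natCast, ← Real.rpow_neg hu0.le, ← Real.rpow_add hu0]
      norm_num

lemma gh_int_wt {φ : ℝ → ℝ} (hc : Continuous φ) {K : ℝ} (h : ∀ t, |φ t| ≤ K * Real.log (|t| + 2))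
    {δ : ℝ} (hδ : 0 < δ) (hδ1 : δ ≤ 1) : Integrable (fun t => φ t * (1 + |t|) ^ (-1 - δ)) := by
  have hcp : Continuous (fun t : ℝ => (1 + |t|) ^ (-1 - δ)) := by
    apply Continuous.rpow_const (by fun_prop)
    intro t
    left
    have := abs_nonneg t
    positivity
  refine ((gh_integrable_pow (half_pos hδ)).const_mul (|K| * (4 / δ))).mono'
    (hc.mul hcp).aestronglyMeasurable (Eventually.of_forall fun t => ?_)
  have h0 := abs_nonneg t
  have hl : 0 ≤ Real.log (|t| + 2) := Real.log_nonneg (by linarith)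
  rw [norm_mul, Real.norm_eq_abs, Real.norm_of_nonneg (by positivity)]
  calc _ ≤ (|K| * (4 / δ * (1 + |t|) ^ (δ / 2))) * (1 + |t|) ^ (-1 - δ) := by
        gcongr
        refine (h t).trans ?_
        calc K * Real.log (|t| + 2) ≤ |K| * Real.log (|t| + 2) := by gcongr; exact le_abs_self K
          _ ≤ _ := by gcongr; exact gh_log_pow hδ hδ1 t
    _ = |K| * (4 / δ) * ((1 + |t|) ^ (δ / 2) * (1 + |t|) ^ (-1 - δ)) := by ring
    _ = _ := by
      rw [← Real.rpow_add (by positivity)]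
      congr 2
      ring

lemma GHGood.line_bound {f : ℂ → ℂ} {A : ℝ} (hG : GHGood f A) :
    ∃ C : ℝ, 0 < C ∧ ∀ x : ℝ, Real.exp 8 ≤ x →
      ‖∫ t : ℝ, logDeriv f ((2:ℝ) + t * I) * ghW x (Real.sqrt x) ((2:ℝ) + t * I)‖ ≤
        C * Real.sqrt x * Real.log x ^ 2 := by
  obtain ⟨C1, hC1, hb1⟩ := hG.bound
  obtain ⟨C2, hC2, hb2⟩ := hG.int_re
  refine ⟨2 * (1024 * 3 * (256 * C2)) + 1024 * 9 * (256 * (5 * C1 * 2)), by positivity, ?_⟩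
  intro x hx
  have hx1 : 1 < x := lt_of_lt_of_le (Real.one_lt_exp_iff.2 (by norm_num)) hx
  have hx0 : 0 < x := by linarith
  have hxe : Real.exp 1 ≤ x := le_trans (Real.exp_le_exp.2 (by norm_num)) hx
  have hlog : 8 ≤ Real.log x := by rwa [Real.le_log_iff_exp_le hx0]
  set h := Real.sqrt x with hh
  have hh0 : 0 < h := Real.sqrt_pos.2 hx0
  set δ := 1 / Real.log x with hδ
  have hδ0 : 0 < δ := by positivity
  have hδ1 : δ ≤ 1 / 8 := one_div_le_one_div_of_le (by norm_num) hlog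
  set σ := 1 / 2 + δ with hσ
  have hdiff : ∀ s : ℂ, σ ≤ s.re → DifferentiableAt ℂ (logDeriv f) s := fun s hs =>
    hG.logDeriv_diffAt (by linarith)
  -- first shift
  have shift1 : ∫ t : ℝ, logDeriv f ((2:ℝ) + t * I) * ghW x h ((2:ℝ) + t * I) =
      ∫ t : ℝ, logDeriv f ((σ:ℝ) + t * I) * ghW x h ((σ:ℝ) + t * I) := by
    obtain ⟨K, hK⟩ := hG.prod_bound (a := σ) (b := 1 / 2) (x := x) (h := h) (by linarith) (by norm_num)
      (by norm_num) hx1.le hh0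
    refine (gh_shift (H := fun s => logDeriv f s * ghW x h s) (a := σ) (b := 2) (K := K) (by linarith) ?_ ?_).symm
    · intro s h1 h2
      exact (hdiff s h1).mul (gh_W_diff hx0 hh0 (by linarith))
    · intro s h1 h2
      exact hK s s h1 h2 (by linarith) h2 rfl
  obtain ⟨K, hK⟩ := hG.prod_bound (a := σ) (b := 1 / 4) (x := x) (h := h) (by linarith) (by norm_num)
      (by norm_num) hx1.le hh0
  have hre : ∀ s : ℂ, (2 * (σ : ℂ) - s).re = 2 * σ - s.re := by intro s; simp
  have him : ∀ s : ℂ, (2 * (σ : ℂ) - s).im = - s.im := by intro s; simp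
  have shift2 : ∫ t : ℝ, logDeriv f ((σ:ℝ) + t * I) * ghW x h (2 * (σ:ℂ) - ((σ:ℝ) + t * I)) =
      ∫ t : ℝ, logDeriv f ((3 / 4:ℝ) + t * I) * ghW x h (2 * (σ:ℂ) - ((3 / 4:ℝ) + t * I)) := by
    refine (gh_shift (H := fun s => logDeriv f s * ghW x h (2 * (σ:ℂ) - s)) (a := σ) (b := 3 / 4) (K := K) (by linarith) ?_ ?_)
    · intro s h1 h2
      refine (hdiff s h1).mul ?_
      have := gh_W_diff (s := 2 * (σ:ℂ) - s) hx0 hh0 (by rw [hre]; linarith)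
      exact DifferentiableAt.comp s this (by fun_prop)
    · intro s h1 h2
      exact hK s _ h1 (by linarith) (by rw [hre]; linarith) (by rw [hre]; linarith) (by rw [him, abs_neg])
  have hconj : ∀ t : ℝ, ghW x h (2 * (σ:ℂ) - ((σ:ℝ) + t * I)) = starRingEnd ℂ (ghW x h ((σ:ℝ) + t * I)) := by
    intro t
    rw [← gh_W_conj hx0 hh0]
    congr 1
    simp
    ring
  set g : ℝ → ℂ := fun t => logDeriv f ((σ:ℝ) + t * I) with hg
  set w : ℝ → ℂ := fun t => ghW x h ((σ:ℝ) + t * I) with hw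
  have hgc : Continuous g := gh_line_cont (fun t => hdiff _ (by simp))
  have hwc : Continuous w := gh_line_cont (fun t => gh_W_diff hx0 hh0 (by simp; linarith))
  have hbgw : ∀ t, ‖g t * w t‖ ≤ K * (1 + |t|) ^ (-(3 / 2 : ℝ)) := fun t => by
    have := hK ((σ:ℝ) + t * I) ((σ:ℝ) + t * I) (by simp) (by simp; linarith) (by simp; linarith) (by simp; linarith) rfl
    simpa using this
  have hI1 : Integrable (fun t => g t * w t) :=
    (gh_integrable_decay.const_mul K).mono' (hgc.mul hwc).aestronglyMeasurable (Eventually.of_forall hbgw)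
  have hI2 : Integrable (fun t => g t * starRingEnd ℂ (w t)) :=
    (gh_integrable_decay.const_mul K).mono'
      (hgc.mul (Complex.continuous_conj.comp hwc)).aestronglyMeasurable (Eventually.of_forall fun t => by
        have := hbgw t
        rw [norm_mul] at this ⊢
        rwa [RCLike.norm_conj])
  have hI2' : Integrable (fun t => starRingEnd ℂ (g t * starRingEnd ℂ (w t))) :=
    (gh_integrable_decay.const_mul K).mono'
      (Complex.continuous_conj.comp (hgc.mul (Complex.continuous_conj.comp hwc))).aestronglyMeasurable
      (Eventually.of_forall fun t => by
        have := hbgw t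
        rw [norm_mul] at this
        rwa [RCLike.norm_conj, norm_mul, RCLike.norm_conj])
  have hsum : ∫ t, g t * w t = (∫ t, (2 * (g t).re : ℝ) * w t) -
      starRingEnd ℂ (∫ t, g t * starRingEnd ℂ (w t)) := by
    rw [← integral_conj, eq_sub_iff_add_eq, ← integral_add hI1 hI2']
    congr 1
    ext t
    simp only [map_mul, conj_conj]
    rw [← add_mul, Complex.add_conj]
  rw [shift1, hsum]
  have p1 : ‖∫ t, (2 * (g t).re : ℝ) * w t‖ ≤ 2 * (1024 * 3 * (256 * C2)) * h * Real.log x ^ 2 := by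
    have i1 : Integrable (fun t => |(g t).re| * (1 + |t|) ^ (-1 - δ)) := by
      apply gh_int_wt (K := C1 * (1 + 1 / (σ - 1 / 2))) (by fun_prop) _ hδ0 (by linarith)
      intro t
      rw [abs_abs]
      refine (abs_re_le_norm _).trans ?_
      have := hb1 ((σ:ℝ) + t * I) (by simp; linarith) (by simp; linarith)
      simpa using this
    have i2 := gh_window (φ := fun t => |(g t).re|) (by fun_prop) (fun t => abs_nonneg _)
      (hb2 σ (by linarith) (by linarith)) hC2.le hδ0 (by linarith) i1
    have hxσ : x ^ σ ≤ 3 * h := by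
      rw [hσ, Real.rpow_add hx0, ← Real.sqrt_eq_rpow, ← hh, Real.rpow_def_of_pos hx0, hδ]
      rw [show Real.log x * (1 / Real.log x) = 1 by field_simp]
      nlinarith [Real.exp_one_lt_d9]
    calc _ ≤ ∫ t, 2 * (1024 * x ^ σ) * (|(g t).re| * (1 + |t|) ^ (-1 - δ)) := by
          apply norm_integral_le_of_norm_le (i1.const_mul _)
          refine Eventually.of_forall fun t => ?_
          have := gh_W_interp hxe (s := (σ:ℝ) + t * I) (by simp; linarith) (by simp; linarith)
          simp only [add_re, ofReal_re, mul_re, I_re, mul_zero, ofReal_im, I_im, mul_one, sub_self, add_zero,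
            add_im, mul_im, zero_add] at this
          rw [norm_mul, norm_real, Real.norm_eq_abs, abs_mul, abs_two]
          calc _ ≤ 2 * |(g t).re| * (1024 * x ^ σ * (1 + |t|) ^ (-1 - δ)) := by gcongr
            _ = _ := by ring
      _ = 2 * (1024 * x ^ σ) * ∫ t, (|(g t).re| * (1 + |t|) ^ (-1 - δ)) := integral_const_mul _ _
      _ ≤ 2 * (1024 * (3 * h)) * (256 * C2 / δ ^ 2) := by
          gcongr
      _ = _ := by rw [hδ]; field_simp
  have p2 : ‖∫ t, g t * starRingEnd ℂ (w t)‖ ≤ 1024 * 9 * (256 * (5 * C1 * 2)) * h * Real.log x ^ 2 := by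
    have e1 : ∫ t, g t * starRingEnd ℂ (w t) =
      ∫ t : ℝ, logDeriv f ((3 / 4:ℝ) + t * I) * ghW x h (2 * (σ:ℂ) - ((3 / 4:ℝ) + t * I)) := by
      rw [← shift2]
      congr 1
      ext t
      rw [hconj]
    rw [e1]
    set G : ℝ → ℂ := fun t => logDeriv f ((3 / 4:ℝ) + t * I) with hGdef
    have hGc : Continuous G := gh_line_cont (fun t => hdiff _ (by simp; linarith))
    have hGb : ∀ t : ℝ, ‖G t‖ ≤ 5 * C1 * Real.log (|t| + 2) := by
      intro t
      have := hb1 ((3 / 4:ℝ) + t * I) (by simp; linarith) (by simp; linarith)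
      refine this.trans (le_of_eq ?_)
      simp
      left
      norm_num
      ring
    have i1 : Integrable (fun t => ‖G t‖ * (1 + |t|) ^ (-1 - δ)) := by
      apply gh_int_wt (K := 5 * C1) (by fun_prop) _ hδ0 (by linarith)
      intro t
      rw [abs_norm]
      exact hGb t
    have i2 := gh_window (φ := fun t => ‖G t‖) (by fun_prop) (fun t => norm_nonneg _) (C := 5 * C1 * 2) (by
      intro T
      have hT0 := abs_nonneg T
      calc ∫ t in T..(T + 1), ‖G t‖ ≤ ∫ t in T..(T + 1), 5 * C1 * Real.log (|T| + 3) := by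
            apply intervalIntegral.integral_mono_on (by linarith)
            · exact (hGc.norm).intervalIntegrable _ _
            · exact continuous_const.intervalIntegrable _ _
            · intro t ht
              refine (hGb t).trans ?_
              have := abs_nonneg t
              have h4 : |t| ≤ |T| + 1 := by
                have h5 := abs_sub_abs_le_abs_sub t T
                have h6 : |t - T| ≤ 1 := by rw [abs_le]; constructor <;> linarith [ht.1, ht.2]
                linarith
              gcongr ?_ * ?_
              exact Real.log_le_log (by linarith) (by linarith)
        _ = 5 * C1 * Real.log (|T| + 3) := by simp
        _ ≤ 5 * C1 * (2 * Real.log (|T| + 2)) := by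
          gcongr
          rw [← Real.log_rpow (by linarith)]
          apply Real.log_le_log (by linarith)
          norm_num
          nlinarith
        _ = _ := by ring) (by positivity) hδ0 (by linarith) i1
    have hxσ : x ^ (2 * σ - 3 / 4) ≤ 9 * h := by
      have e2 : 2 * σ - 3 / 4 = 1 / 4 + 2 * δ := by rw [hσ]; ring
      have e3 : x ^ (1 / 4 : ℝ) ≤ h := by
        rw [hh, Real.sqrt_eq_rpow]
        exact Real.rpow_le_rpow_of_exponent_le hx1.le (by norm_num)
      have e4 : x ^ (2 * δ) ≤ 9 := by
        rw [Real.rpow_def_of_pos hx0, hδ, show Real.log x * (2 * (1 / Real.log x)) = 1 + 1 by field_simp; norm_num,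
          Real.exp_add]
        nlinarith [Real.exp_one_lt_d9, Real.exp_pos 1]
      rw [e2, Real.rpow_add hx0, mul_comm (9:ℝ)]
      gcongr
    calc _ ≤ ∫ t, (1024 * x ^ (2 * σ - 3 / 4)) * (‖G t‖ * (1 + |t|) ^ (-1 - δ)) := by
          apply norm_integral_le_of_norm_le (i1.const_mul _)
          refine Eventually.of_forall fun t => ?_
          have := gh_W_interp hxe (s := 2 * (σ:ℂ) - ((3 / 4:ℝ) + t * I)) (by rw [hre]; simp; linarith)
            (by rw [hre]; simp; linarith)
          rw [hre, him, abs_neg] at this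
          simp only [add_re, ofReal_re, mul_re, I_re, mul_zero, ofReal_im, I_im, mul_one, sub_self, add_zero,
            add_im, mul_im, zero_add] at this
          rw [norm_mul]
          calc _ ≤ ‖G t‖ * (1024 * x ^ (2 * σ - 3 / 4) * (1 + |t|) ^ (-1 - δ)) := by gcongr
            _ = _ := by ring
      _ = (1024 * x ^ (2 * σ - 3 / 4)) * ∫ t, (‖G t‖ * (1 + |t|) ^ (-1 - δ)) := integral_const_mul _ _
      _ ≤ (1024 * (9 * h)) * (256 * (5 * C1 * 2) / δ ^ 2) := by
          gcongr
      _ = _ := by rw [hδ]; field_simp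
  refine (norm_sub_le _ _).trans ?_
  rw [RCLike.norm_conj]
  calc _ ≤ _ := add_le_add p1 p2
    _ = _ := by ring
end GHE2

section GHE3
open Complex Filter Topology

lemma gh_perron {f : ℂ → ℂ} {A : ℝ} (hG : GHGood f A) {a : ℕ → ℂ} {c : ℂ}
    (ha : ∀ n, ‖a n‖ ≤ ArithmeticFunction.vonMangoldt n)
    (hE : ∀ s : ℂ, 1 < s.re → -logDeriv f s = LSeries a s - c * (1 / (s - 1)))
    {x h : ℝ} (hx : 1 ≤ x) (hh : 0 < h) :
    ∫ t : ℝ, logDeriv f ((2:ℝ) + t * I) * ghW x h ((2:ℝ) + t * I) =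
      2 * Real.pi * (c * ((x - 1 + h / 2 : ℝ) : ℂ) - ∑ n ∈ Finset.Ioc 0 ⌊x + h⌋₊, a n * ghw x h n) := by
  have hx0 : 0 < x := by linarith
  have hWi : Integrable (fun t : ℝ => ghW x h ((2:ℝ) + t * I)) := by
    simpa using gh_W1i hx0 hh one_pos
  set F : ℕ → ℝ → ℂ := fun n t => LSeries.term a ((2:ℝ) + t * I) n * ghW x h ((2:ℝ) + t * I) with hF
  have hFeq : ∀ n : ℕ, n ≠ 0 → F n = fun t : ℝ => a n * (ghW x h ((2:ℝ) + t * I) * (((n:ℝ) : ℂ) ^ (-((2:ℝ) + t * I : ℂ)))) := by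
    intro n hn
    ext t
    simp only [hF]
    rw [LSeries.term_of_ne_zero hn, cpow_neg]
    simp only [ofReal_natCast]
    ring
  have hF0 : F 0 = fun _ => 0 := by
    ext t
    simp [hF]
  have hFi : ∀ n, Integrable (F n) := by
    intro n
    rcases eq_or_ne n 0 with rfl | hn
    · rw [hF0]; exact integrable_zero _ _ _
    · rw [hFeq n hn]
      exact (gh_W1i hx0 hh (by positivity)).const_mul _
  have hFint : ∀ n, ∫ t, F n t = if n = 0 then 0 else 2 * Real.pi * (a n * ghw x h n) := by
    intro n
    rcases eq_or_ne n 0 with rfl | hn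
    · rw [hF0]; simp
    · rw [hFeq n hn, integral_const_mul, gh_W1 hx0 hh (by positivity), if_neg hn]
      ring
  have hFs : Summable (fun n => ∫ t, ‖F n t‖) := by
    have hs := (ArithmeticFunction.LSeriesSummable_vonMangoldt (s := 2) (by simp)).norm.mul_right
      (∫ t : ℝ, ‖ghW x h ((2:ℝ) + t * I)‖)
    refine Summable.of_nonneg_of_le (fun n => integral_nonneg fun t => norm_nonneg _) (fun n => ?_) hs
    rw [← integral_const_mul]
    apply integral_mono (hFi n).norm (hWi.norm.const_mul _)
    intro t
    simp only [hF, norm_mul]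
    refine mul_le_mul_of_nonneg_right ?_ (norm_nonneg _)
    rw [LSeries.norm_term_eq, LSeries.norm_term_eq]
    split_ifs with hn
    · rfl
    · simp only [add_re, ofReal_re, mul_re, I_re, mul_zero, ofReal_im, I_im, mul_one, sub_self, add_zero, re_ofNat]
      gcongr
      simpa using (ha n).trans (le_abs_self _)
  have hts := integral_tsum_of_summable_integral_norm hFi hFs
  have hLi : ∀ t : ℝ, ∑' n, F n t = -(logDeriv f ((2:ℝ) + t * I) * ghW x h ((2:ℝ) + t * I)) +
      c * (ghW x h ((2:ℝ) + t * I) * (1 / (((2:ℝ) + t * I : ℂ) - 1))) := by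
    intro t
    have h1 := hE ((2:ℝ) + t * I) (by simp)
    simp only [hF]
    rw [tsum_mul_right]
    have h2 : ∑' n, LSeries.term a ((2:ℝ) + t * I) n = LSeries a ((2:ℝ) + t * I) := rfl
    rw [h2, eq_add_of_sub_eq h1.symm]
    ring
  have hDi : Integrable (fun t : ℝ => logDeriv f ((2:ℝ) + t * I) * ghW x h ((2:ℝ) + t * I)) := by
    obtain ⟨K, hK⟩ := hG.prod_bound (a := 2) (b := 1) (x := x) (h := h) (by norm_num) (by norm_num)
      (by norm_num) hx hh
    apply gh_line_integrable (H := fun s => logDeriv f s * ghW x h s) (K := K)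
    · intro t
      exact (hG.logDeriv_diffAt (by simp; norm_num)).mul (gh_W_diff hx0 hh (by simp))
    · intro t
      have := hK ((2:ℝ) + t * I) ((2:ℝ) + t * I) (by simp) (by simp) (by simp) (by simp) rfl
      simpa using this
  simp_rw [hLi] at hts
  rw [integral_add hDi.fun_neg ((gh_W2i hx0 hh).const_mul c), integral_neg, integral_const_mul, gh_W2 hx hh] at hts
  have hfin : ∑' n, ∫ t, F n t = ∑ n ∈ Finset.Ioc 0 ⌊x + h⌋₊, 2 * Real.pi * (a n * ghw x h n) := by
    rw [tsum_eq_sum (s := Finset.Ioc 0 ⌊x + h⌋₊)]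
    · refine Finset.sum_congr rfl fun n hn => ?_
      rw [hFint, if_neg (by have := (Finset.mem_Ioc.1 hn).1; omega)]
    · intro n hn
      rw [hFint]
      split_ifs with h0
      · rfl
      · have : ⌊x + h⌋₊ < n := by
          by_contra hcon
          exact hn (Finset.mem_Ioc.2 ⟨Nat.pos_of_ne_zero h0, not_lt.1 hcon⟩)
        have h3 : x + h < n := (Nat.floor_lt (by positivity)).1 this
        have : ghw x h n = 0 := by
          rw [ghw, max_eq_right (by linarith), max_eq_right (by linarith)]; simp
        simp [this]
  rw [hfin, ← Finset.mul_sum] at hts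
  linear_combination hts

lemma gh_w_one {x h v : ℝ} (hh : 0 < h) (hv : v ≤ x) : ghw x h v = 1 := by
  rw [ghw, max_eq_left (by linarith), max_eq_left (by linarith)]
  field_simp
  ring

lemma gh_w_abs {x h v : ℝ} (hh : 0 < h) : |ghw x h v| ≤ 1 := by
  have h1 : max (x - v) 0 ≤ max (x + h - v) 0 := max_le_max (by linarith) le_rfl
  have h2 : max (x + h - v) 0 ≤ max (x - v) 0 + h := by
    rcases le_total (x - v) 0 with h | h
    · rw [max_eq_right h]
      exact max_le (by linarith) (by linarith)
    · rw [max_eq_left h]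
      exact max_le (by linarith) (by linarith)
  rw [ghw, abs_div, abs_of_pos hh, div_le_one hh, abs_le]
  constructor <;> linarith

theorem gh_psi {f : ℂ → ℂ} {A : ℝ} (hG : GHGood f A) {a : ℕ → ℂ} {c : ℂ}
    (ha : ∀ n, ‖a n‖ ≤ ArithmeticFunction.vonMangoldt n)
    (hE : ∀ s : ℂ, 1 < s.re → -logDeriv f s = LSeries a s - c * (1 / (s - 1))) :
    ∃ C : ℝ, 0 < C ∧ ∀ x : ℝ, 2 ≤ x →
      ‖∑ n ∈ Finset.Ioc 0 ⌊x⌋₊, a n - c * x‖ ≤ C * Real.sqrt x * Real.log x ^ 2 := by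
  obtain ⟨C, hC, hb⟩ := hG.line_bound
  set B : ℝ := ∑ n ∈ Finset.Ioc 0 ⌊Real.exp 8⌋₊, ArithmeticFunction.vonMangoldt n with hB
  have hB0 : 0 ≤ B := Finset.sum_nonneg fun n _ => ArithmeticFunction.vonMangoldt_nonneg
  have hl2 : 0 < Real.log 2 := Real.log_pos (by norm_num)
  refine ⟨C + 4 + 2 * ‖c‖ + (B + ‖c‖ * Real.exp 8) / Real.log 2 ^ 2, by positivity, ?_⟩
  intro x hx
  have hx0 : 0 < x := by linarith
  have hlogx : Real.log 2 ≤ Real.log x := Real.log_le_log (by norm_num) hx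
  have hs1 : 1 ≤ Real.sqrt x := Real.one_le_sqrt.2 (by linarith)
  rcases lt_or_ge x (Real.exp 8) with hlt | hge
  · have h1 : ‖∑ n ∈ Finset.Ioc 0 ⌊x⌋₊, a n - c * x‖ ≤ B + ‖c‖ * Real.exp 8 := by
      refine (norm_sub_le _ _).trans (add_le_add ?_ ?_)
      · refine (norm_sum_le _ _).trans ?_
        refine (Finset.sum_le_sum fun n _ => ha n).trans ?_
        apply Finset.sum_le_sum_of_subset_of_nonneg
        · exact Finset.Ioc_subset_Ioc_right (Nat.floor_mono hlt.le)
        · intro n _ _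
          exact ArithmeticFunction.vonMangoldt_nonneg
      · rw [norm_mul, norm_real, Real.norm_of_nonneg hx0.le]
        gcongr
    refine h1.trans ?_
    have h2 : B + ‖c‖ * Real.exp 8 = (B + ‖c‖ * Real.exp 8) / Real.log 2 ^ 2 * 1 * Real.log 2 ^ 2 := by
      field_simp
    refine h2.le.trans ?_
    gcongr
    have : 0 ≤ C + 4 + 2 * ‖c‖ := by positivity
    linarith
  · have hlog : 8 ≤ Real.log x := by rwa [Real.le_log_iff_exp_le hx0]
    have h1 := hb x hge
    set h := Real.sqrt x with hh
    have hh0 : 0 < h := by linarith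
    rw [gh_perron hG ha hE (by linarith) hh0] at h1
    have hhx : h ≤ x := by rw [hh, Real.sqrt_le_left hx0.le]; nlinarith
    rw [norm_mul] at h1
    set S := ∑ n ∈ Finset.Ioc 0 ⌊x + h⌋₊, a n * ghw x h n with hS
    have h2 : ‖c * ((x - 1 + h / 2 : ℝ) : ℂ) - S‖ ≤ C * h * Real.log x ^ 2 := by
      have : 1 ≤ ‖(2 * Real.pi : ℂ)‖ := by
        rw [norm_mul, norm_real, Real.norm_of_nonneg Real.pi_pos.le]
        simp
        linarith [Real.pi_gt_three]
      nlinarith [norm_nonneg (c * ((x - 1 + h / 2 : ℝ) : ℂ) - S)]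
    have hfl : ⌊x⌋₊ ≤ ⌊x + h⌋₊ := Nat.floor_mono (by linarith)
    have h3 : S = ∑ n ∈ Finset.Ioc 0 ⌊x⌋₊, a n + ∑ n ∈ Finset.Ioc ⌊x⌋₊ ⌊x + h⌋₊, a n * ghw x h n := by
      rw [hS, ← Finset.sum_Ioc_consecutive _ (Nat.zero_le _) hfl]
      congr 1
      refine Finset.sum_congr rfl fun n hn => ?_
      rw [gh_w_one hh0]
      · simp
      · exact (Nat.le_floor_iff hx0.le).1 (Finset.mem_Ioc.1 hn).2
    have h4 : ‖∑ n ∈ Finset.Ioc ⌊x⌋₊ ⌊x + h⌋₊, a n * ghw x h n‖ ≤ (h + 1) * (2 * Real.log x) := by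
      refine (norm_sum_le _ _).trans ?_
      have : ∀ n ∈ Finset.Ioc ⌊x⌋₊ ⌊x + h⌋₊, ‖a n * ghw x h n‖ ≤ 2 * Real.log x := by
        intro n hn
        have hn1 : (n:ℝ) ≤ x + h := (Nat.le_floor_iff (by positivity)).1 (Finset.mem_Ioc.1 hn).2
        have hn0 : 0 < n := by have := (Finset.mem_Ioc.1 hn).1; omega
        rw [norm_mul, norm_real]
        calc _ ≤ ArithmeticFunction.vonMangoldt n * 1 := by
              refine mul_le_mul (ha n) ?_ (norm_nonneg _) ArithmeticFunction.vonMangoldt_nonneg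
              exact gh_w_abs hh0
          _ ≤ Real.log n := by rw [mul_one]; exact ArithmeticFunction.vonMangoldt_le_log
          _ ≤ Real.log (x ^ 2) := Real.log_le_log (by positivity) (by nlinarith)
          _ = 2 * Real.log x := by rw [Real.log_pow]; norm_num
      refine (Finset.sum_le_card_nsmul _ _ _ this).trans ?_
      rw [nsmul_eq_mul, Nat.card_Ioc]
      refine mul_le_mul_of_nonneg_right ?_ (by linarith)
      rw [Nat.cast_sub hfl]
      have := Nat.floor_le (by positivity : 0 ≤ x + h)
      have := Nat.lt_floor_add_one x
      linarith
    have h5 : ∑ n ∈ Finset.Ioc 0 ⌊x⌋₊, a n - c * x =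
      -(c * ((x - 1 + h / 2 : ℝ) : ℂ) - S) + c * ((h / 2 - 1 : ℝ) : ℂ)
        - ∑ n ∈ Finset.Ioc ⌊x⌋₊ ⌊x + h⌋₊, a n * ghw x h n := by
      rw [h3]
      push_cast
      ring
    have h6 : ‖c * ((h / 2 - 1 : ℝ) : ℂ)‖ ≤ ‖c‖ * (2 * h) := by
      rw [norm_mul, norm_real, Real.norm_eq_abs]
      gcongr
      rw [abs_le]; constructor <;> linarith
    rw [h5]
    refine (norm_sub_le _ _).trans ?_
    refine (add_le_add (norm_add_le _ _) h4).trans ?_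
    rw [norm_neg]
    have h7 : 1 ≤ Real.log x ^ 2 := by nlinarith
    have h8 : (h + 1) * (2 * Real.log x) ≤ 4 * h * Real.log x ^ 2 := by
      have : (h + 1) * (2 * Real.log x) ≤ (2 * h) * (2 * Real.log x) := by gcongr; linarith
      nlinarith
    have h9 : ‖c‖ * (2 * h) ≤ 2 * ‖c‖ * h * Real.log x ^ 2 := by
      have : 0 ≤ ‖c‖ * (2 * h) := by positivity
      nlinarith
    have h10 : 0 ≤ (B + ‖c‖ * Real.exp 8) / Real.log 2 ^ 2 * h * Real.log x ^ 2 := by positivity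
    linarith
end GHE3

section GHA1
open Complex Filter Topology

lemma gh_periodic {N : ℕ} (hN : 0 < N) {b : ℕ → ℂ} (hp : ∀ n, b (N + n) = b n)
    (hz : ∑ k ∈ Finset.range N, b k = 0) :
    ∃ B : ℝ, 0 ≤ B ∧ ∀ n, ‖∑ k ∈ Finset.Icc 1 n, b k‖ ≤ B := by
  set P : ℕ → ℂ := fun n => ∑ k ∈ Finset.range n, b k with hP
  have hPp : Function.Periodic P N := by
    intro n
    simp only [hP]
    rw [add_comm, Finset.sum_range_add, hz, zero_add]
    exact Finset.sum_congr rfl fun k _ => hp k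
  have hPb : ∀ n, ‖P n‖ ≤ ∑ k ∈ Finset.range N, ‖b k‖ := by
    intro n
    rw [← hPp.map_mod_nat]
    refine (norm_sum_le _ _).trans ?_
    apply Finset.sum_le_sum_of_subset_of_nonneg
    · exact Finset.range_mono (Nat.mod_lt _ hN).le
    · intros; positivity
  refine ⟨∑ k ∈ Finset.range N, ‖b k‖ + ‖b 0‖, by positivity, fun n => ?_⟩
  have : ∑ k ∈ Finset.Icc 1 n, b k = P (n + 1) - b 0 := by
    simp only [hP]
    rw [Finset.range_eq_Ico, Finset.sum_eq_sum_Ico_succ_bot (by omega)]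
    simp
    rfl
  rw [this]
  refine (norm_sub_le _ _).trans ?_
  gcongr
  exact hPb _

lemma gh_cont {a : ℕ → ℂ} {m : ℂ} {B : ℝ} (hB : 0 ≤ B)
    (hS : ∀ s : ℂ, 1 < s.re → LSeriesSummable a s)
    (hb : ∀ n : ℕ, ‖∑ k ∈ Finset.Icc 1 n, a k - m * n‖ ≤ B) :
    ∃ M : ℂ → ℂ, (∀ s : ℂ, 0 < s.re → DifferentiableAt ℂ M s) ∧
      (∃ B' : ℝ, 0 ≤ B' ∧ ∀ s : ℂ, 0 < s.re → ‖M s‖ ≤ B' / s.re) ∧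
      ∀ s : ℂ, 1 < s.re → LSeries a s = s * M s + m * s / (s - 1) := by
  set S : ℝ → ℂ := fun t => ∑ k ∈ Finset.Icc 1 ⌊t⌋₊, a k with hSdef
  set R : ℝ → ℂ := fun t => S t - m * t with hR
  set B' := B + ‖m‖ with hB'
  have hB'0 : 0 ≤ B' := by positivity
  have hRb : ∀ t : ℝ, 0 ≤ t → ‖R t‖ ≤ B' := by
    intro t ht
    have : R t = (S t - m * (⌊t⌋₊ : ℂ)) + m * (((⌊t⌋₊ : ℝ) - t : ℝ) : ℂ) := by
      simp only [hR]; push_cast; ring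
    rw [this]
    refine (norm_add_le _ _).trans (add_le_add (hb _) ?_)
    rw [norm_mul, norm_real, Real.norm_eq_abs]
    refine mul_le_of_le_one_right (norm_nonneg _) ?_
    have h1 := Nat.floor_le ht
    have h2 := Nat.lt_floor_add_one t
    rw [abs_le]; constructor <;> linarith
  have hSm : Measurable S := by
    have : Measurable (fun n : ℕ => ∑ k ∈ Finset.Icc 1 n, a k) := measurable_from_top
    exact this.comp Nat.measurable_floor
  have hRm : Measurable R := by
    simp only [hR]
    exact hSm.sub (by fun_prop)
  set g : ℝ → ℂ := (Ioi (1:ℝ)).indicator R with hg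
  have hgm : Measurable g := hRm.indicator measurableSet_Ioi
  have hgb : ∀ t, ‖g t‖ ≤ B' := by
    intro t
    by_cases h : t ∈ Ioi (1:ℝ)
    · rw [hg, indicator_of_mem h]
      exact hRb t (zero_le_one.trans (le_of_lt h))
    · rw [hg, indicator_of_notMem h]; simpa using hB'0
  have hgl : LocallyIntegrable g := by
    intro t
    refine ⟨Metric.ball t 1, Metric.ball_mem_nhds t one_pos, ?_⟩
    refine Measure.integrableOn_of_bounded (M := B') ?_ hgm.aestronglyMeasurable (Eventually.of_forall hgb)
    exact (measure_ball_lt_top).ne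
  have hmel : ∀ s : ℂ, mellin g (-s) = ∫ t in Ioi (1:ℝ), R t * (t:ℂ) ^ (-(s + 1)) := by
    intro s
    rw [mellin]
    have : ∀ t : ℝ, (t:ℂ) ^ (-s - 1) • g t = (Ioi (1:ℝ)).indicator (fun t => R t * (t:ℂ) ^ (-(s + 1))) t := by
      intro t
      by_cases h : t ∈ Ioi (1:ℝ)
      · rw [hg, indicator_of_mem h, indicator_of_mem h, smul_eq_mul, mul_comm]
        congr 2
        ring
      · rw [hg, indicator_of_notMem h, indicator_of_notMem h, smul_zero]
    simp_rw [this]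
    rw [setIntegral_indicator measurableSet_Ioi]
    congr 2
    ext t
    simp
  have hnorm : ∀ s : ℂ, ∀ t ∈ Ioi (1:ℝ), ‖R t * (t:ℂ) ^ (-(s + 1))‖ ≤ B' * t ^ (-s.re - 1) := by
    intro s t ht
    have ht0 : (0:ℝ) < t := lt_trans zero_lt_one ht
    rw [norm_mul, norm_cpow_eq_rpow_re_of_pos ht0]
    have : (-(s + 1)).re = -s.re - 1 := by simp; ring
    rw [this]
    gcongr
    exact hRb t ht0.le
  have hdom : ∀ s : ℂ, 0 < s.re → IntegrableOn (fun t : ℝ => B' * t ^ (-s.re - 1)) (Ioi 1) := by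
    intro s hs
    exact (integrableOn_Ioi_rpow_of_lt (by linarith) one_pos).const_mul _
  refine ⟨fun s => mellin g (-s), ?_, ⟨B', hB'0, ?_⟩, ?_⟩
  · intro s hs
    have : DifferentiableAt ℂ (mellin g) (-s) := by
      apply mellin_differentiableAt_of_isBigO_rpow (a := 0) (b := -s.re - 1)
      · exact hgl.locallyIntegrableOn _
      · apply Asymptotics.IsBigO.of_bound B'
        refine Eventually.of_forall fun t => ?_
        simpa using hgb t
      · simpa using hs
      · apply Asymptotics.IsBigO.of_bound 1
        have : ∀ᶠ t : ℝ in 𝓝[>] 0, t < 1 := by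
          apply eventually_nhdsWithin_of_eventually_nhds
          exact gt_mem_nhds one_pos
        filter_upwards [this] with t ht
        have : g t = 0 := by
          rw [hg, indicator_of_notMem]
          simp; exact ht.le
        rw [this, norm_zero]
        positivity
      · simp
    exact DifferentiableAt.comp (g := mellin g) (f := fun s => -s) s this (by fun_prop)
  · intro s hs
    simp only
    rw [hmel]
    refine (norm_integral_le_of_norm_le (hdom s hs) ?_).trans ?_
    · exact (ae_restrict_iff' measurableSet_Ioi).2 (Eventually.of_forall (hnorm s))
    · rw [integral_const_mul, integral_Ioi_rpow_of_lt (by linarith) one_pos]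
      rw [Real.one_rpow, show -s.re - 1 + 1 = -s.re by ring]
      apply le_of_eq
      field_simp
  · intro s hs
    have hs0 : 0 < s.re := by linarith
    have hO : (fun n : ℕ ↦ ∑ k ∈ Finset.Icc 1 n, a k) =O[atTop] fun n ↦ (n : ℝ) ^ (1:ℝ) := by
      apply Asymptotics.IsBigO.of_bound (B + ‖m‖)
      filter_upwards [eventually_ge_atTop 1] with n hn
      have hn' : (1:ℝ) ≤ n := by exact_mod_cast hn
      rw [Real.rpow_one, Real.norm_of_nonneg (by positivity)]
      have h1 := norm_le_norm_add_norm_sub' (∑ k ∈ Finset.Icc 1 n, a k) (m * n)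
      have h2 := hb n
      rw [norm_mul, Complex.norm_natCast] at h1
      nlinarith
    rw [LSeries_eq_mul_integral a zero_le_one hs (hS s hs) hO]
    simp only
    rw [hmel]
    have hi1 : IntegrableOn (fun t : ℝ => R t * (t:ℂ) ^ (-(s + 1))) (Ioi 1) := by
      refine Integrable.mono' (hdom s hs0) ?_ ?_
      · apply Measurable.aestronglyMeasurable
        apply hRm.mul
        fun_prop
      · exact (ae_restrict_iff' measurableSet_Ioi).2 (Eventually.of_forall (hnorm s))
    have hi2 : IntegrableOn (fun t : ℝ => m * (t:ℂ) ^ (-s)) (Ioi 1) :=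
      (integrableOn_Ioi_cpow_of_lt (by simpa) one_pos).const_mul _
    have heq : ∫ t in Ioi (1:ℝ), (∑ k ∈ Finset.Icc 1 ⌊t⌋₊, a k) * (t:ℂ) ^ (-(s + 1)) =
        ∫ t in Ioi (1:ℝ), (R t * (t:ℂ) ^ (-(s + 1)) + m * (t:ℂ) ^ (-s)) := by
      apply setIntegral_congr_fun measurableSet_Ioi
      intro t ht
      have ht0 : (t:ℂ) ≠ 0 := by
        have : (0:ℝ) < t := lt_trans zero_lt_one ht
        exact_mod_cast this.ne'
      have : (t:ℂ) ^ (-s) = t * (t:ℂ) ^ (-(s + 1)) := by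
        rw [show -s = 1 + (-(s + 1)) by ring, cpow_add _ _ ht0, cpow_one]
      simp only [hR, hSdef]
      rw [this]
      ring
    rw [heq, integral_add hi1 hi2, integral_const_mul, integral_Ioi_cpow_of_lt (by simpa) one_pos]
    have h1 : s - 1 ≠ 0 := fun h => by
      have := congrArg re h
      simp at this
      linarith
    have h2 : -s + 1 ≠ 0 := by
      intro h
      apply h1
      linear_combination -h
    simp only [ofReal_one, one_cpow]
    rw [show -s + 1 = -(s - 1) by ring]
    field_simp
end GHA1

section GHA2
open Complex Filter Topology

lemma gh_sum_range {N : ℕ} [NeZero N] (F : ZMod N → ℂ) :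
    ∑ k ∈ Finset.range N, F (k : ZMod N) = ∑ x : ZMod N, F x := by
  apply Finset.sum_nbij' (fun k : ℕ => (k : ZMod N)) (fun x => x.val)
  · simp
  · intro x _
    simpa using ZMod.val_lt x
  · intro k hk
    exact ZMod.val_cast_of_lt (Finset.mem_range.1 hk)
  · intro x _
    simp
  · simp

lemma gh_char_cont {N : ℕ} [NeZero N] (χ : DirichletCharacter ℂ N) :
    ∃ (m : ℂ) (M : ℂ → ℂ), (χ ≠ 1 → m = 0) ∧ (∀ s : ℂ, 0 < s.re → DifferentiableAt ℂ M s) ∧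
      (∃ B' : ℝ, 0 ≤ B' ∧ ∀ s : ℂ, 0 < s.re → ‖M s‖ ≤ B' / s.re) ∧
      ∀ s : ℂ, 1 < s.re → DirichletCharacter.LFunction χ s = s * M s + m * s / (s - 1) := by
  set m : ℂ := (∑ x : ZMod N, χ x) / N with hm
  have hN : 0 < N := Nat.pos_of_ne_zero (NeZero.ne N)
  have hN' : (N : ℂ) ≠ 0 := by exact_mod_cast hN.ne'
  obtain ⟨B, hB, hb⟩ := gh_periodic hN (b := fun k => χ (k : ZMod N) - m) (by intro n; simp) (by
    rw [Finset.sum_sub_distrib, gh_sum_range (fun x => χ x)]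
    simp [hm]
    field_simp
    simp)
  obtain ⟨M, h1, h2, h3⟩ := gh_cont (a := fun k => χ (k : ZMod N)) (m := m) hB
    (fun s hs => DirichletCharacter.LSeriesSummable_of_one_lt_re χ hs) (by
      intro n
      have := hb n
      rw [Finset.sum_sub_distrib] at this
      simpa [mul_comm] using this)
  refine ⟨m, M, ?_, h1, h2, ?_⟩
  · intro hχ
    rw [hm, MulChar.sum_eq_zero_of_ne_one hχ, zero_div]
  · intro s hs
    rw [DirichletCharacter.LFunction_eq_LSeries χ hs]
    exact h3 s hs

lemma gh_identity {F G : ℂ → ℂ} (hF : Differentiable ℂ F)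
    (hG : ∀ s : ℂ, 0 < s.re → DifferentiableAt ℂ G s) (h : ∀ s : ℂ, 1 < s.re → F s = G s) :
    ∀ s : ℂ, 0 < s.re → F s = G s := by
  have ho : IsOpen {s : ℂ | 0 < s.re} := isOpen_lt continuous_const continuous_re
  have ho1 : IsOpen {s : ℂ | 1 < s.re} := isOpen_lt continuous_const continuous_re
  have hc : IsPreconnected {s : ℂ | 0 < s.re} := (convex_halfSpace_re_gt 0).isPreconnected
  have hFa : AnalyticOnNhd ℂ F {s : ℂ | 0 < s.re} := hF.differentiableOn.analyticOnNhd ho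
  have hGd : DifferentiableOn ℂ G {s : ℂ | 0 < s.re} :=
    fun s hs => (hG s hs).differentiableWithinAt
  have hGa : AnalyticOnNhd ℂ G {s : ℂ | 0 < s.re} := hGd.analyticOnNhd ho
  have := hFa.eqOn_of_preconnected_of_eventuallyEq hGa hc (z₀ := 2) (by simp) (by
    filter_upwards [ho1.mem_nhds (show (2:ℂ) ∈ {s : ℂ | 1 < s.re} by simp)] with s hs
    exact h s hs)
  exact fun s hs => this hs

lemma gh_L_lower {N : ℕ} [NeZero N] (χ : DirichletCharacter ℂ N) :
    ∃ Z : ℝ, 1 ≤ Z ∧ ∀ t : ℝ, 1 / Z ≤ ‖DirichletCharacter.LFunction χ (2 + t * I)‖ := by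
  have hs1 : LSeriesSummable (1 : ℕ → ℂ) 2 := LSeriesSummable_one_iff.2 (by simp)
  refine ⟨1 + ∑' n, ‖LSeries.term (1 : ℕ → ℂ) 2 n‖, ?_, ?_⟩
  · have : 0 ≤ ∑' n, ‖LSeries.term (1 : ℕ → ℂ) 2 n‖ := tsum_nonneg fun n => norm_nonneg _
    linarith
  · intro t
    have hre : 1 < ((2:ℂ) + t * I).re := by simp
    have h1 := DirichletCharacter.LSeries.mul_mu_eq_one χ hre
    rw [DirichletCharacter.LFunction_eq_LSeries χ hre]
    set L2 := LSeries ((fun n : ℕ => χ (n : ZMod N)) * (fun n : ℕ => ((ArithmeticFunction.moebius n : ℤ) : ℂ))) (2 + t * I) with hL2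
    have h2 : ‖L2‖ ≤ 1 + ∑' n, ‖LSeries.term (1 : ℕ → ℂ) 2 n‖ := by
      have hle : ∀ n, ‖LSeries.term ((fun n : ℕ => χ (n : ZMod N)) * (fun n : ℕ => ((ArithmeticFunction.moebius n : ℤ) : ℂ))) (2 + t * I) n‖
          ≤ ‖LSeries.term (1 : ℕ → ℂ) 2 n‖ := by
        intro n
        rw [LSeries.norm_term_eq, LSeries.norm_term_eq]
        split_ifs with hn
        · rfl
        · simp only [add_re, ofReal_re, mul_re, I_re, mul_zero, ofReal_im, I_im, mul_one, sub_self, add_zero, re_ofNat]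
          gcongr
          simp only [Pi.mul_apply, Pi.one_apply, norm_one, norm_mul]
          have e1 := DirichletCharacter.norm_le_one χ (n : ZMod N)
          have e2 : ‖((ArithmeticFunction.moebius n : ℤ) : ℂ)‖ ≤ 1 := by
            rw [Complex.norm_intCast]
            exact_mod_cast ArithmeticFunction.abs_moebius_le_one
          exact mul_le_one₀ e1 (norm_nonneg _) e2
      have hsum := Summable.of_nonneg_of_le (fun n => norm_nonneg _) hle hs1.norm
      have := (norm_tsum_le_tsum_norm hsum).trans (Summable.tsum_le_tsum hle hsum hs1.norm)
      have h3 : ‖L2‖ ≤ ∑' n, ‖LSeries.term (1 : ℕ → ℂ) 2 n‖ := this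
      linarith
    have h4 : ‖LSeries (fun n : ℕ => χ (n : ZMod N)) (2 + t * I)‖ * ‖L2‖ = 1 := by
      rw [← norm_mul, h1, norm_one]
    have hZ : 0 < 1 + ∑' n, ‖LSeries.term (1 : ℕ → ℂ) 2 n‖ := by
      have : 0 ≤ ∑' n, ‖LSeries.term (1 : ℕ → ℂ) 2 n‖ := tsum_nonneg fun n => norm_nonneg _
      linarith
    rw [div_le_iff₀ hZ]
    calc (1:ℝ) = _ := h4.symm
      _ ≤ _ := by gcongr

lemma gh_norm_le {s : ℂ} (h : 1 / 10 ≤ s.re) (h4 : s.re ≤ 4) : ‖s‖ ≤ 4 * (1 + |s.im|) := by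
  have := Complex.norm_le_abs_re_add_abs_im s
  rw [abs_of_nonneg (by linarith)] at this
  have := abs_nonneg s.im
  linarith

lemma gh_good_nontriv (hGRH : GeneralizedRiemannHypothesis) {N : ℕ} [NeZero N]
    {χ : DirichletCharacter ℂ N} (hχ : χ ≠ 1) : ∃ A, GHGood (DirichletCharacter.LFunction χ) A := by
  obtain ⟨m, M, hm, hM, ⟨B, hB0, hB⟩, hL⟩ := gh_char_cont χ
  obtain ⟨Z, hZ, hlow⟩ := gh_L_lower χ
  have hd := DirichletCharacter.differentiable_LFunction hχ
  have hid : ∀ s : ℂ, 0 < s.re → DirichletCharacter.LFunction χ s = s * M s := by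
    apply gh_identity hd
    · intro s hs
      exact differentiableAt_id.mul (hM s hs)
    · intro s hs
      rw [hL s hs, hm hχ]
      simp
  refine ⟨Z + 40 * B, by linarith, hd, ?_, ?_, ?_⟩
  · intro s h1 h4
    rw [hid s (by linarith), norm_mul]
    have hn := gh_norm_le h1 h4
    have hMb : ‖M s‖ ≤ 10 * B := by
      refine (hB s (by linarith)).trans ?_
      rw [div_le_iff₀ (by linarith)]
      nlinarith
    have ht := abs_nonneg s.im
    calc _ ≤ (4 * (1 + |s.im|)) * (10 * B) := by gcongr
      _ = (40 * B) * (1 + |s.im|) := by ring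
      _ ≤ (Z + 40 * B) * (1 + |s.im|) ^ 2 := by
        have : (1 + |s.im|) ≤ (1 + |s.im|) ^ 2 := by nlinarith
        gcongr
        linarith
  · intro t
    refine le_trans ?_ (hlow t)
    apply one_div_le_one_div_of_le (by linarith) (by linarith)
  · intro s hs h0
    rcases lt_or_ge s.re 1 with h | h
    · have := hGRH N χ s h0 (by linarith) h
      linarith
    · exact DirichletCharacter.LFunction_ne_zero_of_one_le_re χ (Or.inl hχ) h h0

lemma gh_good_triv (hGRH : GeneralizedRiemannHypothesis) (N : ℕ) [NeZero N] :
    ∃ A, GHGood (DirichletCharacter.LFunctionTrivChar₁ N) A := by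
  obtain ⟨m, M, hm, hM, ⟨B, hB0, hB⟩, hL⟩ := gh_char_cont (1 : DirichletCharacter ℂ N)
  obtain ⟨Z, hZ, hlow⟩ := gh_L_lower (1 : DirichletCharacter ℂ N)
  have hd := DirichletCharacter.differentiable_LFunctionTrivChar₁ N
  have hne : ∀ s : ℂ, s ≠ 1 → DirichletCharacter.LFunctionTrivChar₁ N s =
      (s - 1) * DirichletCharacter.LFunction (1 : DirichletCharacter ℂ N) s := by
    intro s hs
    rw [DirichletCharacter.LFunctionTrivChar₁, Function.update_of_ne hs]
  have hid : ∀ s : ℂ, 0 < s.re → DirichletCharacter.LFunctionTrivChar₁ N s = s * ((s - 1) * M s + m) := by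
    apply gh_identity hd
    · intro s hs
      exact differentiableAt_id.mul (((differentiableAt_id.sub_const 1).mul (hM s hs)).add_const m)
    · intro s hs
      have h1 : s ≠ 1 := fun h => by simp [h] at hs
      have h2 : s - 1 ≠ 0 := sub_ne_zero.2 h1
      rw [hne s h1, hL s hs]
      field_simp
  refine ⟨Z + 4 * (50 * B + ‖m‖), by have := norm_nonneg m; linarith, hd, ?_, ?_, ?_⟩
  · intro s h1 h4
    rw [hid s (by linarith), norm_mul]
    have hn := gh_norm_le h1 h4
    have hMb : ‖M s‖ ≤ 10 * B := by
      refine (hB s (by linarith)).trans ?_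
      rw [div_le_iff₀ (by linarith)]
      nlinarith
    have ht := abs_nonneg s.im
    have hn1 : ‖s - 1‖ ≤ 5 * (1 + |s.im|) := by
      refine (norm_sub_le _ _).trans ?_
      rw [norm_one]
      linarith
    have h5 : ‖(s - 1) * M s + m‖ ≤ (50 * B + ‖m‖) * (1 + |s.im|) := by
      refine (norm_add_le _ _).trans ?_
      rw [norm_mul]
      calc _ ≤ (5 * (1 + |s.im|)) * (10 * B) + ‖m‖ := by gcongr
        _ ≤ _ := by nlinarith [mul_nonneg (norm_nonneg m) ht]
    calc _ ≤ (4 * (1 + |s.im|)) * ((50 * B + ‖m‖) * (1 + |s.im|)) := by gcongr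
      _ = (4 * (50 * B + ‖m‖)) * (1 + |s.im|) ^ 2 := by ring
      _ ≤ _ := by
        gcongr
        linarith
  · intro t
    have h1 : (2 + t * I : ℂ) ≠ 1 := fun h => by
      have := congrArg re h
      simp at this
    rw [hne _ h1, norm_mul]
    have h2 : 1 ≤ ‖(2 + t * I - 1 : ℂ)‖ := by
      refine le_trans ?_ (abs_re_le_norm _)
      norm_num
    have h3 := hlow t
    have h4 : 1 / (Z + 4 * (50 * B + ‖m‖)) ≤ 1 / Z :=
      one_div_le_one_div_of_le (by linarith) (by have := norm_nonneg m; linarith)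
    have h5 := norm_nonneg (DirichletCharacter.LFunction (1 : DirichletCharacter ℂ N) (2 + t * I))
    nlinarith
  · intro s hs
    rcases eq_or_ne s 1 with rfl | h1
    · exact DirichletCharacter.LFunctionTrivChar₁_apply_one_ne_zero N
    · rw [hne s h1]
      refine mul_ne_zero (sub_ne_zero.2 h1) ?_
      intro h0
      rcases lt_or_ge s.re 1 with h | h
      · have := hGRH N 1 s h0 (by linarith) h
        linarith
      · exact DirichletCharacter.LFunction_ne_zero_of_one_le_re _ (Or.inr h1) h h0

theorem gh_char (hGRH : GeneralizedRiemannHypothesis) {N : ℕ} [NeZero N] (χ : DirichletCharacter ℂ N) :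
    ∃ C : ℝ, 0 < C ∧ ∀ x : ℝ, 2 ≤ x →
      ‖∑ n ∈ Finset.Ioc 0 ⌊x⌋₊, χ (n : ZMod N) * (ArithmeticFunction.vonMangoldt n : ℂ) - (if χ = 1 then 1 else 0) * x‖
        ≤ C * Real.sqrt x * Real.log x ^ 2 := by
  have ha : ∀ n : ℕ, ‖χ (n : ZMod N) * (ArithmeticFunction.vonMangoldt n : ℂ)‖ ≤ ArithmeticFunction.vonMangoldt n := by
    intro n
    rw [norm_mul, norm_real, Real.norm_of_nonneg ArithmeticFunction.vonMangoldt_nonneg]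
    exact mul_le_of_le_one_left ArithmeticFunction.vonMangoldt_nonneg (DirichletCharacter.norm_le_one χ _)
  by_cases hχ : χ = 1
  · subst hχ
    obtain ⟨A, hA⟩ := gh_good_triv hGRH N
    simp only [if_true]
    refine gh_psi hA (c := 1) ha ?_
    intro s hs
    have h1 : s ≠ 1 := fun h => by simp [h] at hs
    have h2 : s - 1 ≠ 0 := sub_ne_zero.2 h1
    have hv := DirichletCharacter.LSeries_twist_vonMangoldt_eq (1 : DirichletCharacter ℂ N) hs
    have hv' : LSeries (fun n : ℕ => (1 : DirichletCharacter ℂ N) (n : ZMod N) * (ArithmeticFunction.vonMangoldt n : ℂ)) s =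
      -deriv (LSeries (fun n : ℕ => (1 : DirichletCharacter ℂ N) (n : ZMod N))) s / LSeries (fun n : ℕ => (1 : DirichletCharacter ℂ N) (n : ZMod N)) s := hv
    have hL0 := DirichletCharacter.LFunction_ne_zero_of_one_le_re (1 : DirichletCharacter ℂ N) (Or.inr h1) hs.le
    rw [hv', logDeriv_apply, DirichletCharacter.deriv_LFunctionTrivChar₁_apply_of_ne_one N h1,
      DirichletCharacter.LFunctionTrivChar₁, Function.update_of_ne h1, DirichletCharacter.LFunctionTrivChar,
      DirichletCharacter.deriv_LFunction_eq_deriv_LSeries _ hs]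
    rw [DirichletCharacter.LFunction_eq_LSeries _ hs] at hL0 ⊢
    field_simp
    ring
  · obtain ⟨A, hA⟩ := gh_good_nontriv hGRH hχ
    simp only [if_neg hχ]
    refine gh_psi hA (c := 0) ha ?_
    intro s hs
    have hv := DirichletCharacter.LSeries_twist_vonMangoldt_eq χ hs
    have hv' : LSeries (fun n : ℕ => χ (n : ZMod N) * (ArithmeticFunction.vonMangoldt n : ℂ)) s =
      -deriv (LSeries (fun n : ℕ => χ (n : ZMod N))) s / LSeries (fun n : ℕ => χ (n : ZMod N)) s := hv
    rw [hv', logDeriv_apply, DirichletCharacter.deriv_LFunction_eq_deriv_LSeries _ hs,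
      DirichletCharacter.LFunction_eq_LSeries _ hs]
    ring
end GHA2

section
open Complex

lemma gh_ap (hGRH : GeneralizedRiemannHypothesis) (d : ℕ) [NeZero d] :
    ∃ C : ℝ, 0 < C ∧ ∀ x : ℝ, 2 ≤ x →
      |∑ n ∈ Finset.Ioc 0 ⌊x⌋₊, (if d ∣ n - 1 then (1:ℝ) else 0) * ArithmeticFunction.vonMangoldt n
        - (1 / (d.totient : ℝ)) * x| ≤ C * Real.sqrt x * Real.log x ^ 2 := by
  classical
  choose C hC0 hC using fun χ : DirichletCharacter ℂ d => gh_char hGRH χ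
  have hφ : 0 < (d.totient : ℝ) := by
    exact_mod_cast Nat.totient_pos.2 (Nat.pos_of_ne_zero (NeZero.ne d))
  have hφ1 : (1:ℝ) ≤ d.totient := by
    exact_mod_cast Nat.totient_pos.2 (Nat.pos_of_ne_zero (NeZero.ne d))
  have hφc : (d.totient : ℂ) ≠ 0 := by exact_mod_cast hφ.ne'
  refine ⟨∑ χ, C χ, Finset.sum_pos (fun χ _ => hC0 χ) Finset.univ_nonempty, fun x hx => ?_⟩
  have key : ((d.totient : ℂ)) * ((∑ n ∈ Finset.Ioc 0 ⌊x⌋₊, (if d ∣ n - 1 then (1:ℝ) else 0) * ArithmeticFunction.vonMangoldt n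
        - (1 / (d.totient : ℝ)) * x : ℝ) : ℂ) = ∑ χ : DirichletCharacter ℂ d,
        (∑ n ∈ Finset.Ioc 0 ⌊x⌋₊, χ (n : ZMod d) * (ArithmeticFunction.vonMangoldt n : ℂ)
          - (if χ = 1 then 1 else 0) * x) := by
    rw [Finset.sum_sub_distrib, Finset.sum_comm, ← Finset.sum_mul]
    simp only [← Finset.sum_mul, DirichletCharacter.sum_characters_eq]
    simp only [Finset.sum_ite_eq', Finset.mem_univ, if_true, one_mul]
    push_cast
    rw [mul_sub, Finset.mul_sum, ← mul_assoc, mul_one_div_cancel hφc, one_mul]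
    congr 1
    refine Finset.sum_congr rfl fun n hn => ?_
    have h1 : 1 ≤ n := (Finset.mem_Ioc.1 hn).1
    have : (n : ZMod d) = 1 ↔ d ∣ n - 1 := by
      rw [← Nat.modEq_iff_dvd' h1, ← ZMod.natCast_eq_natCast_iff, Nat.cast_one, eq_comm]
    simp only [this]
    split_ifs <;> simp
  have h2 := congrArg norm key
  rw [norm_mul, Complex.norm_natCast, Complex.norm_real, Real.norm_eq_abs] at h2
  calc _ ≤ (d.totient : ℝ) * _ := le_mul_of_one_le_left (abs_nonneg _) hφ1
    _ = _ := h2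
    _ ≤ ∑ χ : DirichletCharacter ℂ d, C χ * Real.sqrt x * Real.log x ^ 2 :=
        (norm_sum_le _ _).trans (Finset.sum_le_sum fun χ _ => hC χ x hx)
    _ = _ := by rw [Finset.sum_mul, Finset.sum_mul]

lemma gh_prod_dvd (S : Finset ℕ) (hS : ∀ l ∈ S, l.Prime) (m : ℕ) :
    ∏ l ∈ S, (if l ∣ m then (1:ℝ) else 0) = if (∏ l ∈ S, l) ∣ m then 1 else 0 := by
  have : (∏ l ∈ S, l) ∣ m ↔ ∀ l ∈ S, l ∣ m := by
    constructor
    · exact fun h l hl => (Finset.dvd_prod_of_mem _ hl).trans h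
    · intro h
      exact Finset.prod_primes_dvd m (fun a ha => (hS a ha).prime) h
  simp only [this, Finset.prod_boole]

lemma gh_totient_prod (S : Finset ℕ) (hS : ∀ l ∈ S, l.Prime) :
    ((∏ l ∈ S, l).totient : ℝ) = ∏ l ∈ S, ((l : ℝ) - 1) := by
  induction S using Finset.induction_on with
  | empty => simp
  | insert a s ha ih =>
    have hp := hS a (Finset.mem_insert_self _ _)
    rw [Finset.prod_insert ha, Finset.prod_insert ha, Nat.totient_mul, Nat.cast_mul,
      ih (fun l hl => hS l (Finset.mem_insert_of_mem hl)), Nat.totient_prime hp,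
      Nat.cast_sub hp.one_le, Nat.cast_one]
    refine Nat.Coprime.prod_right fun b hb => ?_
    refine (Nat.coprime_primes hp (hS b (Finset.mem_insert_of_mem hb))).2 ?_
    rintro rfl
    exact ha hb

lemma gh_ape (hGRH : GeneralizedRiemannHypothesis) (e : ℕ) :
    ∃ C : ℝ, 0 < C ∧ ∀ x : ℝ, 2 ≤ x →
      |∑ n ∈ Finset.Ioc 0 ⌊x⌋₊, (∏ l ∈ e.primeFactors, (1 - if l ∣ n - 1 then (1:ℝ) else 0))
          * ArithmeticFunction.vonMangoldt n
        - (∏ l ∈ e.primeFactors, (1 - 1 / ((l : ℝ) - 1))) * x|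
        ≤ C * Real.sqrt x * Real.log x ^ 2 := by
  classical
  have hgen : ∀ S : Finset ℕ, ∃ C : ℝ, 0 < C ∧ ((∀ l ∈ S, l.Prime) → ∀ x : ℝ, 2 ≤ x →
      |∑ n ∈ Finset.Ioc 0 ⌊x⌋₊, (∏ l ∈ S, (if l ∣ n - 1 then (1:ℝ) else 0))
          * ArithmeticFunction.vonMangoldt n
        - (∏ l ∈ S, (1 / ((l : ℝ) - 1))) * x| ≤ C * Real.sqrt x * Real.log x ^ 2) := by
    intro S
    by_cases hS : ∀ l ∈ S, l.Prime
    · have : NeZero (∏ l ∈ S, l) := ⟨Finset.prod_ne_zero_iff.2 fun l hl => (hS l hl).ne_zero⟩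
      obtain ⟨C, hC, h⟩ := gh_ap hGRH (∏ l ∈ S, l)
      refine ⟨C, hC, fun _ x hx => ?_⟩
      have := h x hx
      rw [gh_totient_prod S hS, one_div, ← Finset.prod_inv_distrib] at this
      simp only [gh_prod_dvd S hS, one_div]
      exact this
    · exact ⟨1, one_pos, fun h => absurd h hS⟩
  choose C hC0 hC using hgen
  refine ⟨∑ S ∈ e.primeFactors.powerset, C S,
    Finset.sum_pos (fun S _ => hC0 S) ⟨∅, by simp⟩, fun x hx => ?_⟩
  have expand : ∀ f : ℕ → ℝ, ∏ l ∈ e.primeFactors, (1 - f l)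
      = ∑ S ∈ e.primeFactors.powerset, (-1) ^ S.card * ∏ l ∈ S, f l := by
    intro f
    have := Finset.prod_one_add (f := fun l => - f l) e.primeFactors
    simp only [← sub_eq_add_neg] at this
    rw [this]
    exact Finset.sum_congr rfl fun S _ => Finset.prod_neg _
  simp only [expand]
  have : ∑ n ∈ Finset.Ioc 0 ⌊x⌋₊, (∑ S ∈ e.primeFactors.powerset,
        (-1) ^ S.card * ∏ l ∈ S, (if l ∣ n - 1 then (1:ℝ) else 0)) * ArithmeticFunction.vonMangoldt n
      - (∑ S ∈ e.primeFactors.powerset, (-1) ^ S.card * ∏ l ∈ S, (1 / ((l : ℝ) - 1))) * x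
      = ∑ S ∈ e.primeFactors.powerset, (-1) ^ S.card *
        (∑ n ∈ Finset.Ioc 0 ⌊x⌋₊, (∏ l ∈ S, (if l ∣ n - 1 then (1:ℝ) else 0))
          * ArithmeticFunction.vonMangoldt n
        - (∏ l ∈ S, (1 / ((l : ℝ) - 1))) * x) := by
    simp only [mul_sub, Finset.sum_sub_distrib, Finset.sum_mul, Finset.mul_sum, mul_assoc]
    rw [Finset.sum_comm]
  rw [this]
  refine (Finset.abs_sum_le_sum_abs _ _).trans ?_
  rw [Finset.sum_mul, Finset.sum_mul]
  refine Finset.sum_le_sum fun S hS => ?_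
  rw [abs_mul, abs_pow, abs_neg, abs_one, one_pow, one_mul]
  refine hC S (fun l hl => Nat.prime_of_mem_primeFactors (Finset.mem_powerset.1 hS hl)) x hx

end

section
open Real

lemma gh_h_bound {t : ℝ} (ht : 0 < t) : |1 / log t - 1 / (t - 1)| ≤ 1 := by
  have h1 := log_le_sub_one_of_pos ht
  have h2 := one_sub_inv_le_log_of_pos ht
  have e1 : 1 - t⁻¹ = (t - 1) / t := by field_simp
  rw [e1] at h2
  rcases lt_trichotomy t 1 with h | h | h
  · have hn : t - 1 < 0 := by linarith
    have hl : log t < 0 := log_neg ht h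
    have k1 : 1 / (t - 1) ≤ 1 / log t := one_div_le_one_div_of_neg_of_le hn h1
    have k2 : 1 / log t ≤ 1 / ((t - 1) / t) := one_div_le_one_div_of_neg_of_le hl h2
    have k3 : 1 / ((t - 1) / t) = 1 + 1 / (t - 1) := by
      have := hn.ne
      field_simp
      ring
    rw [abs_le]
    constructor <;> linarith
  · subst h; simp
  · have hn : 0 < t - 1 := by linarith
    have hl : 0 < log t := log_pos h
    have k1 : 1 / (t - 1) ≤ 1 / log t := one_div_le_one_div_of_le hl h1
    have k2 : 1 / log t ≤ 1 / ((t - 1) / t) := one_div_le_one_div_of_le (by positivity) h2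
    have k3 : 1 / ((t - 1) / t) = 1 + 1 / (t - 1) := by
      have := hn.ne'
      field_simp
      ring
    rw [abs_le]
    constructor <;> linarith

lemma gh_h_int {a b : ℝ} (ha : 0 ≤ a) (hb : 0 ≤ b) :
    IntervalIntegrable (fun t : ℝ => 1 / log t - 1 / (t - 1)) volume a b := by
  have h1 : IntervalIntegrable (fun _ : ℝ => (1:ℝ)) volume a b := intervalIntegrable_const
  refine h1.mono_fun (Measurable.aestronglyMeasurable (by fun_prop)) ?_
  refine (ae_restrict_iff' measurableSet_uIoc).2 (Filter.Eventually.of_forall fun t ht => ?_)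
  have : 0 < t := lt_of_le_of_lt (le_min ha hb) ht.1
  have h2 := gh_h_bound this
  simpa only [norm_one, norm_eq_abs] using h2

lemma gh_inv_int {a b : ℝ} (h : (1:ℝ) ∉ uIcc a b) :
    IntervalIntegrable (fun t : ℝ => 1 / (t - 1)) volume a b := by
  refine ContinuousOn.intervalIntegrable fun t ht => ContinuousAt.continuousWithinAt ?_
  have : t - 1 ≠ 0 := by
    intro h0
    have : t = 1 := by linarith
    exact h (this ▸ ht)
  fun_prop (disch := assumption)

lemma gh_log_int {a b : ℝ} (ha : 0 ≤ a) (hb : 0 ≤ b) (h : (1:ℝ) ∉ uIcc a b) :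
    IntervalIntegrable (fun t : ℝ => 1 / log t) volume a b := by
  have := (gh_h_int ha hb).add (gh_inv_int h)
  refine this.congr (fun t _ => ?_)
  simp

lemma gh_inv_integral {a b : ℝ} (h : (1:ℝ) ∉ uIcc a b) :
    ∫ t in a..b, 1 / (t - 1) = log ((b - 1) / (a - 1)) := by
  rw [intervalIntegral.integral_comp_sub_right (fun t => 1 / t) 1, integral_one_div]
  intro h0
  apply h
  rw [mem_uIcc] at h0 ⊢
  rcases h0 with h0 | h0
  · left; constructor <;> linarith
  · right; constructor <;> linarith

lemma gh_li : ∃ A : ℝ, ∀ x : ℝ, 2 ≤ x → li x = A + ∫ t in (2:ℝ)..x, 1 / log t := by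
  refine ⟨∫ t in (0:ℝ)..2, (1 / log t - 1 / (t - 1)), fun x hx => ?_⟩
  unfold li
  apply Filter.Tendsto.limUnder_eq
  set B := ∫ t in (2:ℝ)..x, 1 / log t
  set A := ∫ t in (0:ℝ)..2, (1 / log t - 1 / (t - 1))
  have hT : Filter.Tendsto (fun ε : ℝ => A + B - ∫ t in (1-ε)..(1+ε), (1 / log t - 1 / (t - 1)))
      (nhdsWithin 0 (Ioi 0)) (nhds (A + B)) := by
    have hz : Filter.Tendsto (fun ε : ℝ => ∫ t in (1-ε)..(1+ε), (1 / log t - 1 / (t - 1)))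
      (nhdsWithin 0 (Ioi 0)) (nhds 0) := by
      have h2 : Filter.Tendsto (fun ε : ℝ => 2 * ε) (nhdsWithin 0 (Ioi 0)) (nhds 0) := by
        have : Filter.Tendsto (fun ε : ℝ => 2 * ε) (nhds 0) (nhds (2 * 0)) :=
          (continuous_const.mul continuous_id).tendsto 0
        rw [mul_zero] at this
        exact this.mono_left nhdsWithin_le_nhds
      refine squeeze_zero_norm' ?_ h2
      filter_upwards [Ioo_mem_nhdsGT (show (0:ℝ) < 1 by norm_num)] with ε hε
      have := intervalIntegral.norm_integral_le_of_norm_le_const (a := 1 - ε) (b := 1 + ε)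
        (f := fun t => 1 / log t - 1 / (t - 1)) (C := 1) (fun t ht => by
          rw [uIoc_of_le (by linarith [hε.1])] at ht
          exact gh_h_bound (by linarith [hε.2, ht.1]))
      refine this.trans (le_of_eq ?_)
      rw [show 1 + ε - (1 - ε) = 2 * ε by ring, abs_of_pos (by linarith [hε.1]), one_mul]
    simpa using (tendsto_const_nhds (x := A + B)).sub hz
  refine hT.congr' ?_
  filter_upwards [Ioo_mem_nhdsGT (show (0:ℝ) < 1 by norm_num)] with ε hε
  obtain ⟨h0, h1⟩ := hε
  have n1 : (1:ℝ) ∉ uIcc 0 (1 - ε) := by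
    rw [uIcc_of_le (by linarith)]; intro h; linarith [h.2]
  have n2 : (1:ℝ) ∉ uIcc (1 + ε) 2 := by
    rw [uIcc_of_le (by linarith)]; intro h; linarith [h.1]
  have n3 : (1:ℝ) ∉ uIcc 2 x := by
    rw [uIcc_of_le (by linarith)]; intro h; linarith [h.1]
  rw [← integral_Ioc_eq_integral_Ioo, ← integral_Ioc_eq_integral_Ioo,
    ← intervalIntegral.integral_of_le (by linarith), ← intervalIntegral.integral_of_le (by linarith)]
  have i1 : ∫ t in (0:ℝ)..(1 - ε), 1 / log t
      = (∫ t in (0:ℝ)..(1 - ε), (1 / log t - 1 / (t - 1))) + log ε := by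
    rw [intervalIntegral.integral_sub (gh_log_int (by linarith) (by linarith) n1) (gh_inv_int n1),
      gh_inv_integral n1]
    rw [show (1 - ε - 1) / (0 - 1) = ε by ring]; ring
  have i2 : ∫ t in (1 + ε)..2, 1 / log t
      = (∫ t in (1 + ε)..2, (1 / log t - 1 / (t - 1))) - log ε := by
    rw [intervalIntegral.integral_sub (gh_log_int (by linarith) (by linarith) n2) (gh_inv_int n2),
      gh_inv_integral n2]
    rw [show (2 - 1) / (1 + ε - 1) = ε⁻¹ by ring, log_inv]; ring
  rw [← intervalIntegral.integral_add_adjacent_intervals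
    (gh_log_int (by linarith) (by linarith) n2) (gh_log_int (by linarith) (by linarith) n3), i1, i2]
  have s1 := intervalIntegral.integral_add_adjacent_intervals
    (gh_h_int (a := 0) (b := 1 - ε) (by linarith) (by linarith))
    (gh_h_int (a := 1 - ε) (b := 1 + ε) (by linarith) (by linarith))
  have s2 := intervalIntegral.integral_add_adjacent_intervals
    (gh_h_int (a := 0) (b := 1 + ε) (by linarith) (by linarith))
    (gh_h_int (a := 1 + ε) (b := 2) (by linarith) (by linarith))
  simp only [A, B]
  linarith

end

section
open Real

lemma gh_abel (a : ℕ → ℝ) {x : ℝ} (hx : 2 ≤ x) :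
    ∑ n ∈ Finset.Icc 0 ⌊x⌋₊, (if n.Prime then a n else 0)
      = (∑ n ∈ Finset.Icc 0 ⌊x⌋₊, (if n.Prime then a n * log n else 0)) / log x
        + ∫ t in (2:ℝ)..x,
          (∑ n ∈ Finset.Icc 0 ⌊t⌋₊, (if n.Prime then a n * log n else 0)) / (t * log t ^ 2) := by
  set b : ℕ → ℝ := fun n => if n.Prime then a n * log n else 0 with hb
  trans ∑ n ∈ Finset.Icc 0 ⌊x⌋₊, (log n)⁻¹ * b n
  · refine Finset.sum_congr rfl fun n hn ↦ ?_
    simp only [hb]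
    split_ifs with h
    · have : log n ≠ 0 := log_ne_zero_of_pos_of_ne_one (mod_cast h.pos) (mod_cast h.ne_one)
      field_simp
    · simp
  rw [sum_mul_eq_sub_integral_mul₁ b (f := fun n ↦ (log n)⁻¹) (by simp [hb, Nat.not_prime_zero])
    (by simp [hb, Nat.not_prime_one]), ← intervalIntegral.integral_of_le hx]
  · have int_deriv (f : ℝ → ℝ) :
        ∫ u in (2:ℝ)..x, deriv (fun x ↦ (log x)⁻¹) u * f u =
        ∫ u in (2:ℝ)..x, -(f u / (u * log u ^ 2)) :=
      intervalIntegral.integral_congr fun u _ ↦ by simp [field]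
    rw [int_deriv, intervalIntegral.integral_neg]
    ring
  · intro z ⟨_, _⟩
    have : z ≠ 0 := by linarith
    have : log z ≠ 0 := by apply log_ne_zero_of_pos_of_ne_one <;> linarith
    fun_prop (disch := assumption)
  · refine ContinuousOn.integrableOn_Icc fun z ⟨_, _⟩ ↦ ContinuousWithinAt.congr ?_
      (fun _ _ ↦ deriv_inv_log_apply) deriv_inv_log_apply
    have : z ≠ 0 := by linarith
    have : log z ^ 2 ≠ 0 := by
      refine pow_ne_zero 2 <| log_ne_zero_of_pos_of_ne_one ?_ ?_ <;> linarith
    exact ContinuousAt.continuousWithinAt <| by fun_prop (disch := assumption)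

lemma gh_abel_int (b : ℕ → ℝ) {x : ℝ} (hx : 2 ≤ x) :
    IntervalIntegrable (fun t => (∑ n ∈ Finset.Icc 0 ⌊t⌋₊, b n) / (t * log t ^ 2)) volume 2 x := by
  rw [intervalIntegrable_iff_integrableOn_Icc_of_le hx]
  simp only [div_eq_mul_one_div (∑ n ∈ Finset.Icc 0 ⌊_⌋₊, b n), mul_comm (∑ n ∈ Finset.Icc 0 ⌊_⌋₊, b n)]
  refine integrableOn_mul_sum_Icc _ (by norm_num) <| ContinuousOn.integrableOn_Icc fun x hx ↦
    ContinuousAt.continuousWithinAt ?_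
  have : x ≠ 0 := by linarith [hx.1]
  have : x * log x ^ 2 ≠ 0 := mul_ne_zero this <| pow_ne_zero 2 <|
    log_ne_zero_of_pos_of_ne_one (by linarith [hx.1]) (by linarith [hx.1])
  fun_prop (disch := assumption)

lemma gh_li_parts {x : ℝ} (hx : 2 ≤ x) :
    ∫ t in (2:ℝ)..x, 1 / log t = x / log x - 2 / log 2 + ∫ t in (2:ℝ)..x, 1 / log t ^ 2 := by
  have n3 : (1:ℝ) ∉ uIcc 2 x := by
    rw [uIcc_of_le (by linarith)]; intro h; linarith [h.1]
  have i1 := gh_log_int (by linarith) (by linarith) n3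
  have i2 := Chebyshev.intervalIntegrable_one_div_log_sq (a := 2) (b := x) (by norm_num) (by linarith)
  have := intervalIntegral.integral_eq_sub_of_hasDerivAt (a := 2) (b := x)
    (f := fun t => t / log t) (f' := fun t => 1 / log t - 1 / log t ^ 2) (fun t ht => by
      rw [uIcc_of_le hx] at ht
      have h0 : t ≠ 0 := by linarith [ht.1]
      have hl : log t ≠ 0 := log_ne_zero_of_pos_of_ne_one (by linarith [ht.1]) (by linarith [ht.1])
      have := (hasDerivAt_id t).div (hasDerivAt_log h0) hl
      refine this.congr_deriv ?_
      simp only [id]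
      field_simp) (i1.sub i2)
  rw [intervalIntegral.integral_sub i1 i2] at this
  linarith

lemma gh_sqrt_int {x : ℝ} (hx : 2 ≤ x) :
    IntervalIntegrable (fun t => 1 / √t) volume 2 x ∧ ∫ t in (2:ℝ)..x, 1 / √t ≤ 2 * √x := by
  have hi : IntervalIntegrable (fun t => 1 / √t) volume 2 x := by
    refine ContinuousOn.intervalIntegrable fun t ht => ContinuousAt.continuousWithinAt ?_
    rw [uIcc_of_le hx] at ht
    have : √t ≠ 0 := (sqrt_pos.2 (by linarith [ht.1])).ne'
    fun_prop (disch := assumption)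
  refine ⟨hi, ?_⟩
  have := intervalIntegral.integral_eq_sub_of_hasDerivAt (a := 2) (b := x)
    (f := fun t => 2 * √t) (f' := fun t => 1 / √t) (fun t ht => by
      rw [uIcc_of_le hx] at ht
      have h0 : t ≠ 0 := by linarith [ht.1]
      have := (hasDerivAt_sqrt h0).const_mul 2
      refine this.congr_deriv ?_
      have : √t ≠ 0 := (sqrt_pos.2 (by linarith [ht.1])).ne'
      field_simp) hi
  rw [this]
  linarith [sqrt_nonneg 2]

lemma gh_theta (a : ℕ → ℝ) (ha0 : ∀ n, 0 ≤ a n) (ha1 : ∀ n, a n ≤ 1) {x : ℝ} (hx : 2 ≤ x) :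
    |∑ n ∈ Finset.Icc 0 ⌊x⌋₊, (if n.Prime then a n * log n else 0)
      - ∑ n ∈ Finset.Ioc 0 ⌊x⌋₊, a n * ArithmeticFunction.vonMangoldt n| ≤ 2 * √x * log x := by
  have e : ∑ n ∈ Finset.Icc 0 ⌊x⌋₊, (if n.Prime then a n * log n else 0)
      = ∑ n ∈ Finset.Ioc 0 ⌊x⌋₊, (if n.Prime then a n * log n else 0) := by
    symm
    apply Finset.sum_subset (fun n hn => by simp at hn ⊢; exact hn.2)
    intro n h1 h2
    have : n = 0 := by
      simp only [Finset.mem_Icc, Finset.mem_Ioc] at h1 h2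
      omega
    simp [this, Nat.not_prime_zero]
  have h2 := (Chebyshev.psi_sub_theta_eq_sum_not_prime x).symm.le.trans
    (Chebyshev.psi_sub_theta_le (x := x) (by linarith))
  rw [e, ← Finset.sum_sub_distrib]
  refine (Finset.abs_sum_le_sum_abs _ _).trans (le_trans ?_ h2)
  rw [Finset.sum_filter]
  refine Finset.sum_le_sum fun n _ => ?_
  by_cases h : n.Prime
  · simp [h, ArithmeticFunction.vonMangoldt_apply_prime]
  · have hv : 0 ≤ ArithmeticFunction.vonMangoldt n := ArithmeticFunction.vonMangoldt_nonneg
    simp only [h, if_false, zero_sub, abs_neg, not_false_eq_true, if_true]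
    rw [abs_of_nonneg (mul_nonneg (ha0 n) hv)]
    exact mul_le_of_le_one_left hv (ha1 n)

lemma gh_partial (a : ℕ → ℝ) (ha0 : ∀ n, 0 ≤ a n) (ha1 : ∀ n, a n ≤ 1) (κ C : ℝ) (hC : 0 < C)
    (h : ∀ x : ℝ, 2 ≤ x → |∑ n ∈ Finset.Ioc 0 ⌊x⌋₊, a n * ArithmeticFunction.vonMangoldt n
      - κ * x| ≤ C * √x * log x ^ 2) :
    ∃ C' : ℝ, 0 < C' ∧ ∀ x : ℝ, 2 ≤ x →
      |∑ n ∈ Finset.Icc 0 ⌊x⌋₊, (if n.Prime then a n else 0) - κ * li x| ≤ C' * √x * log x := by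
  obtain ⟨A, hA⟩ := gh_li
  have l2 : 0 < log 2 := log_pos (by norm_num)
  set D := C + 2 / log 2 with hD
  have hD0 : 0 < D := by positivity
  set K := |κ * (2 / log 2 - A)| with hK
  have hE : ∀ t : ℝ, 2 ≤ t → |∑ n ∈ Finset.Icc 0 ⌊t⌋₊, (if n.Prime then a n * log n else 0) - κ * t|
      ≤ D * √t * log t ^ 2 := by
    intro t ht
    have h1 := gh_theta a ha0 ha1 ht
    have h3 := h t ht
    have hl : log 2 ≤ log t := log_le_log (by norm_num) ht
    have h4 : 2 * √t * log t ≤ 2 / log 2 * √t * log t ^ 2 := by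
      have : 1 ≤ log t / log 2 := (one_le_div l2).2 hl
      have h5 : 0 ≤ 2 * √t * log t := mul_nonneg (by positivity) (l2.le.trans hl)
      calc _ ≤ 2 * √t * log t * (log t / log 2) := le_mul_of_one_le_right h5 this
        _ = _ := by ring
    refine (abs_sub_le _ _ _).trans ((add_le_add h1 h3).trans ?_)
    rw [hD]
    nlinarith
  refine ⟨D + 2 * D / log 2 + K / log 2, by positivity, fun x hx => ?_⟩
  have hl : log 2 ≤ log x := log_le_log (by norm_num) hx
  have hlx : 0 < log x := l2.trans_le hl
  have hs : 1 ≤ √x := one_le_sqrt.2 (by linarith)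
  set S : ℝ → ℝ := fun t => ∑ n ∈ Finset.Icc 0 ⌊t⌋₊, (if n.Prime then a n * log n else 0) with hS
  have i1 : IntervalIntegrable (fun t => S t / (t * log t ^ 2)) volume 2 x := gh_abel_int _ hx
  have i2 := Chebyshev.intervalIntegrable_one_div_log_sq (a := 2) (b := x) (by norm_num) (by linarith)
  have ab : ∑ n ∈ Finset.Icc 0 ⌊x⌋₊, (if n.Prime then a n else 0)
      = S x / log x + ∫ t in (2:ℝ)..x, S t / (t * log t ^ 2) := gh_abel a hx
  have hdiff : ∑ n ∈ Finset.Icc 0 ⌊x⌋₊, (if n.Prime then a n else 0) - κ * li x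
      = (S x - κ * x) / log x + (∫ t in (2:ℝ)..x, (S t / (t * log t ^ 2) - κ * (1 / log t ^ 2)))
        + κ * (2 / log 2 - A) := by
    rw [ab, hA x hx, gh_li_parts hx, intervalIntegral.integral_sub i1 (i2.const_mul κ),
      intervalIntegral.integral_const_mul]
    ring
  obtain ⟨q1, q2⟩ := gh_sqrt_int hx
  have b1 : |(S x - κ * x) / log x| ≤ D * √x * log x := by
    rw [abs_div, abs_of_pos hlx, div_le_iff₀ hlx]
    refine (hE x hx).trans (le_of_eq (by ring))
  have b2 : |∫ t in (2:ℝ)..x, (S t / (t * log t ^ 2) - κ * (1 / log t ^ 2))| ≤ D * (2 * √x) := by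
    have := intervalIntegral.norm_integral_le_of_norm_le (a := 2) (b := x) (μ := volume)
      (f := fun t => (S t / (t * log t ^ 2) - κ * (1 / log t ^ 2))) (g := fun t => D * (1 / √t)) hx
      (Filter.Eventually.of_forall fun t ht => ?_) (q1.const_mul D)
    · rw [intervalIntegral.integral_const_mul] at this
      exact this.trans (mul_le_mul_of_nonneg_left q2 hD0.le)
    · have t2 : 2 ≤ t := ht.1.le
      have t0 : 0 < t := by linarith
      have hlt : 0 < log t := log_pos (by linarith)
      have : S t / (t * log t ^ 2) - κ * (1 / log t ^ 2) = (S t - κ * t) / (t * log t ^ 2) := by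
        field_simp
      rw [this, norm_eq_abs, abs_div, abs_of_pos (by positivity : 0 < t * log t ^ 2),
        div_le_iff₀ (by positivity)]
      refine (hE t t2).trans (le_of_eq ?_)
      have hst : 0 < √t := sqrt_pos.2 t0
      have : t = √t * √t := (mul_self_sqrt t0.le).symm
      calc D * √t * log t ^ 2 = D * (1 / √t) * ((√t * √t) * log t ^ 2) := by field_simp
        _ = _ := by rw [← this]
  rw [hdiff]
  refine (abs_add_three _ _ _).trans ?_
  have h1 : 1 ≤ log x / log 2 := (one_le_div l2).2 hl
  have c2 : D * (2 * √x) ≤ 2 * D / log 2 * √x * log x := by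
    calc D * (2 * √x) ≤ D * (2 * √x) * (log x / log 2) := le_mul_of_one_le_right (by positivity) h1
      _ = _ := by ring
  have c3 : K ≤ K / log 2 * √x * log x := by
    have : 1 ≤ √x * (log x / log 2) := one_le_mul_of_one_le_of_one_le hs h1
    calc K ≤ K * (√x * (log x / log 2)) := le_mul_of_one_le_right (abs_nonneg _) this
      _ = _ := by ring
  calc _ ≤ D * √x * log x + 2 * D / log 2 * √x * log x + K / log 2 * √x * log x :=
        add_le_add (add_le_add b1 (b2.trans c2)) c3
    _ = _ := by ring

end

lemma gh_coprime_prod (e m : ℕ) (he : e ≠ 0) :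
    ∏ l ∈ e.primeFactors, (1 - if l ∣ m then (1:ℝ) else 0) = if Nat.gcd m e = 1 then 1 else 0 := by
  have h1 : ∀ l, (1 - if l ∣ m then (1:ℝ) else 0) = if ¬ l ∣ m then 1 else 0 := by
    intro l; split_ifs <;> simp_all
  simp only [h1, Finset.prod_boole]
  congr 1
  rw [eq_iff_iff, ← Nat.coprime_iff_gcd_eq_one, Nat.coprime_comm]
  constructor
  · intro h
    refine Nat.coprime_of_dvd fun k hk hke hkm => h k ?_ hkm
    exact Nat.mem_primeFactors.2 ⟨hk, hke, he⟩
  · intro h l hl hlm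
    have hp := Nat.prime_of_mem_primeFactors hl
    exact Nat.not_coprime_of_dvd_of_dvd hp.one_lt (Nat.dvd_of_mem_primeFactors hl) hlm h

lemma gh_count_sum (e : ℕ) {x : ℝ} (hx : 2 ≤ x) : (primePiCoprime e x : ℝ)
    = ∑ n ∈ Finset.Icc 0 ⌊x⌋₊, (if n.Prime then (if Nat.gcd (n - 1) e = 1 then (1:ℝ) else 0) else 0) := by
  classical
  have : primePiCoprime e x
      = ((Finset.Icc 0 ⌊x⌋₊).filter (fun n => n.Prime ∧ Nat.gcd (n - 1) e = 1)).card := by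
    unfold primePiCoprime
    rw [← Nat.card_eq_finsetCard]
    refine Nat.card_congr (Equiv.subtypeEquivRight fun p => ?_)
    simp only [Finset.mem_filter, Finset.mem_Icc, zero_le, true_and,
      Nat.le_floor_iff (show 0 ≤ x by linarith)]
    tauto
  rw [this, Finset.card_filter]
  push_cast
  refine Finset.sum_congr rfl fun n _ => ?_
  split_ifs <;> simp_all

theorem gh_final (e : ℕ) (he : 3 ≤ e) (hGRH : GeneralizedRiemannHypothesis) :
    ∃ C : ℝ, 0 < C ∧ ∀ x : ℝ, 2 ≤ x →
      |(primePiCoprime e x : ℝ) - (∏ l ∈ e.primeFactors, (1 - 1 / ((l : ℝ) - 1))) * li x|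
        ≤ C * Real.sqrt x * Real.log x := by
  obtain ⟨C, hC, h⟩ := gh_ape hGRH e
  simp only [gh_coprime_prod e _ (show e ≠ 0 by omega)] at h
  obtain ⟨C', hC', h'⟩ := gh_partial (fun n => if Nat.gcd (n - 1) e = 1 then (1:ℝ) else 0)
    (fun n => by split_ifs <;> norm_num) (fun n => by split_ifs <;> norm_num) _ C hC h
  refine ⟨C', hC', fun x hx => ?_⟩
  rw [gh_count_sum e hx]
  exact h' x hx

/-- Theorem 3.7 of the paper. -/
theorem count_primes_coprime
    (hGRH : GeneralizedRiemannHypothesis)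
    (e : ℕ) (he : 3 ≤ e) :
    ∃ C : ℝ, 0 < C ∧ ∀ x : ℝ, 2 ≤ x →
      |(primePiCoprime e x : ℝ)
        - (∏ l ∈ e.primeFactors, (1 - 1 / ((l : ℝ) - 1))) * li x|
      ≤ C * Real.sqrt x * Real.log x := by
  exact gh_final e he hGRH
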